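/- Let G be a finite graph and T ⊆ V(G). Then the maximal number of pairwise edge-disjoint T-paths equals the minimum, over all T-partitions 𝒜 = {X_t : t ∈ T}, of (1/2)·(Σ_{t∈T} d(X_t) − o(G,𝒜)), where o(G,𝒜) is the number of components Y of G − ⋃𝒜 with d(Y) odd. -/

import Mathlib

/-!
Common definitions: multigraphs (parallel edges allowed, no loops), walks,
paths, cuts, waves and related notions used in the statements below.
-/

universe u v

/-- A multigraph with vertex type `V` and edge type `E`: every edge is assigned
an unordered pair of *distinct* end-vertices (parallel edges allowed, no loops). -/
structure Multigraph (V : Type u) (E : Type v) : Type (max u v) where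
  inc : E → Sym2 V
  not_isDiag : ∀ e, ¬ (inc e).IsDiag

namespace Multigraph

variable {V : Type u} {E : Type v}

/-- Walks in a multigraph, recorded together with the edges they traverse. -/
inductive Walk (G : Multigraph V E) : V → V → Type (max u v)
  | nil (v : V) : Walk G v v
  | cons {u v w : V} (e : E) (he : G.inc e = s(u, v)) (p : Walk G v w) : Walk G u w

namespace Walk

variable {G : Multigraph V E}

/-- The list of vertices visited by a walk. -/
def support : ∀ {u w : V}, G.Walk u w → List V
  | _, _, .nil v => [v]
  | u, _, .cons _ _ p => u :: p.support

/-- The list of edges traversed by a walk. -/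
def edges : ∀ {u w : V}, G.Walk u w → List E
  | _, _, .nil _ => []
  | _, _, .cons e _ p => e :: p.edges

end Walk

/-- `δ_G(v)`: the set of edges incident with the vertex `v`. -/
def inci (G : Multigraph V E) (v : V) : Set E := {e | v ∈ G.inc e}

/-- `δ_G(X)`: the set of edges with exactly one end-vertex in `X`. -/
def cut (G : Multigraph V E) (X : Set V) : Set E :=
  {e | ∃ x y, G.inc e = s(x, y) ∧ x ∈ X ∧ y ∉ X}

/-- Connectedness of a multigraph. -/
def Connected (G : Multigraph V E) : Prop := ∀ u v : V, Nonempty (G.Walk u v)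

/-- A `T`-path: a path connecting two distinct vertices of `T`
with no internal vertex in `T`. -/
structure TPath (G : Multigraph V E) (T : Set V) : Type (max u v) where
  first : V
  last : V
  walk : G.Walk first last
  first_mem : first ∈ T
  last_mem : last ∈ T
  ne : first ≠ last
  support_nodup : walk.support.Nodup
  internal : ∀ x ∈ walk.support, x ∈ T → x = first ∨ x = last

/-- A system of pairwise edge-disjoint `T`-paths. -/
def TPathDisjoint (G : Multigraph V E) {T : Set V} (P : Set (G.TPath T)) : Prop :=
  ∀ p ∈ P, ∀ q ∈ P, p ≠ q → ∀ e, e ∈ p.walk.edges → e ∉ q.walk.edges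

/-- An `st`-path: a path from `s` to `t` (no internal vertex is `s` or `t`,
which is automatic as the vertices of a path are distinct). -/
structure STPath (G : Multigraph V E) (s t : V) : Type (max u v) where
  walk : G.Walk s t
  support_nodup : walk.support.Nodup

/-- A system of pairwise edge-disjoint `st`-paths. -/
def STPathDisjoint (G : Multigraph V E) {s t : V} (P : Set (G.STPath s t)) : Prop :=
  ∀ p ∈ P, ∀ q ∈ P, p ≠ q → ∀ e, e ∈ p.walk.edges → e ∉ q.walk.edges

/-- A nontrivial path starting at `s`. -/
structure SPath (G : Multigraph V E) (s : V) : Type (max u v) where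
  last : V
  walk : G.Walk s last
  support_nodup : walk.support.Nodup
  edges_ne_nil : walk.edges ≠ []

/-- A system of pairwise edge-disjoint paths starting at `s`. -/
def SPathDisjoint (G : Multigraph V E) {s : V} (W : Set (G.SPath s)) : Prop :=
  ∀ p ∈ W, ∀ q ∈ W, p ≠ q → ∀ e, e ∈ p.walk.edges → e ∉ q.walk.edges

/-- The set of last edges of a system of paths starting at `s`. -/
def lastEdges (G : Multigraph V E) {s : V} (W : Set (G.SPath s)) : Set E :=
  {e | ∃ p ∈ W, p.walk.edges.getLast? = some e}

/-- `C` is a cut separating `A` from `B`. -/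
def SepCut (G : Multigraph V E) (A B : Set V) (C : Set E) : Prop :=
  ∃ X : Set V, A ⊆ X ∧ (∀ b ∈ B, b ∉ X) ∧ C = G.cut X

/-- `C` is a `⊆`-minimal cut separating `A` from `B`. -/
def IsMinSepCut (G : Multigraph V E) (A B : Set V) (C : Set E) : Prop :=
  G.SepCut A B C ∧ ∀ D : Set E, G.SepCut A B D → D ⊆ C → D = C

/-- An `s`-`B`-wave: a system of pairwise edge-disjoint paths starting at `s`
whose set of last edges is a `⊆`-minimal cut separating `s` from `B`. -/
def IsWave (G : Multigraph V E) (s : V) (B : Set V) (W : Set (G.SPath s)) : Prop :=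
  G.SPathDisjoint W ∧ G.IsMinSepCut {s} B (G.lastEdges W)

/-- An Erdős–Menger `st`-cut: an `st`-cut which is orthogonal to some system of
pairwise edge-disjoint `st`-paths, i.e. it consists of exactly one edge chosen
from each path of the system. -/
def IsEMCut (G : Multigraph V E) (s t : V) (C : Set E) : Prop :=
  (∃ X : Set V, s ∈ X ∧ t ∉ X ∧ C = G.cut X) ∧
  ∃ P : Set (G.STPath s t), G.STPathDisjoint P ∧
    (∀ p ∈ P, ∃! e, e ∈ C ∧ e ∈ p.walk.edges) ∧
    (∀ e ∈ C, ∃ p ∈ P, e ∈ p.walk.edges)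

/-- The order `≼` on `st`-cuts: the `s`-side of `C` is contained in the
`s`-side of `D` (in a connected graph the `s`-side is unique). -/
def CutLE (G : Multigraph V E) (s t : V) (C D : Set E) : Prop :=
  ∃ X Y : Set V, s ∈ X ∧ t ∉ X ∧ C = G.cut X ∧ s ∈ Y ∧ t ∉ Y ∧ D = G.cut Y ∧ X ⊆ Y

/-- A cut of the form `C_W` for some `st`-wave `W`. -/
def IsWaveCut (G : Multigraph V E) (s t : V) (C : Set E) : Prop :=
  ∃ W : Set (G.SPath s), G.IsWave s {t} W ∧ G.lastEdges W = C

/-- Deletion of a set of edges. -/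
def deleteEdges (G : Multigraph V E) (F : Set E) : Multigraph V {e : E // e ∉ F} where
  inc e := G.inc e.1
  not_isDiag e := G.not_isDiag e.1

open Classical in
/-- Contraction of the vertex set `X` to the vertex `s` (edges inside `X` are
deleted, edges leaving `X` are redirected to `s`). -/
noncomputable def contract (G : Multigraph V E) (X : Set V) (s : V) :
    Multigraph V {e : E // ¬ (Sym2.map (fun v => if v ∈ X then s else v) (G.inc e)).IsDiag} where
  inc e := Sym2.map (fun v => if v ∈ X then s else v) (G.inc e.1)
  not_isDiag e := e.2

/-- Reachability inside a set `S` of vertices. -/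
def ReachableIn (G : Multigraph V E) (S : Set V) (x y : V) : Prop :=
  ∃ p : G.Walk x y, ∀ z ∈ p.support, z ∈ S

/-- `Y` is (the vertex set of) a connected component of the subgraph of `G`
induced by `S`. -/
def IsComponentOf (G : Multigraph V E) (Y S : Set V) : Prop :=
  Y.Nonempty ∧ Y ⊆ S ∧ ∀ x ∈ Y, ∀ y ∈ S, (G.ReachableIn S x y ↔ y ∈ Y)

/-- A cycle in a multigraph (a closed walk with distinct edges whose
vertices are distinct except that the first one equals the last one). -/
structure Cycle (G : Multigraph V E) : Type (max u v) where
  base : V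
  walk : G.Walk base base
  edges_ne_nil : walk.edges ≠ []
  edges_nodup : walk.edges.Nodup
  support_tail_nodup : walk.support.tail.Nodup

/-- A graph is Eulerian if its edge set can be partitioned into
edge sets of cycles. -/
def IsEulerian (G : Multigraph V E) : Prop :=
  ∃ C : Set G.Cycle,
    (∀ c ∈ C, ∀ d ∈ C, c ≠ d → ∀ e, e ∈ c.walk.edges → e ∉ d.walk.edges) ∧
    ∀ e : E, ∃ c ∈ C, e ∈ c.walk.edges

/-- A `T`-partition: a family `{A t : t ∈ T}` of pairwise disjoint vertex sets
with `A t ∩ T = {t}`. -/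
def IsTPartition (T : Set V) (A : V → Set V) : Prop :=
  (∀ t ∈ T, A t ∩ T = {t}) ∧
  ∀ t₁ ∈ T, ∀ t₂ ∈ T, t₁ ≠ t₂ → Disjoint (A t₁) (A t₂)

end Multigraph

/-!
Attach sufficiently many pendant elements of colour `t` to every terminal `t` and call two elements
(pendant elements or edges) adjacent if they share a vertex. Edge-disjoint `T`-paths then become
disjoint paths between differently coloured elements. Labelling the vertices by colours or by
anonymous classes bounds the number of such paths: each of them contains an element with two colours
or two boundary elements of a class. The vertices labelled `t` form the set `A t` of a
`T`-partition, and a class with an odd number of boundary elements accounts for an obstructive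
component.

That the bound is attained is shown by induction. If no two elements have the same colour, the
labelling by connected components provides enough paths joining distinct coloured elements, and
these can be uncrossed because adjacency is claw-free. If `s` and another element have the same
colour, give `s` a new one. In the resulting packing at most one path becomes monochromatic, and it
starts at `s`. Colouring or deleting an element next to `s` then gives an instance whose packing,
rerouted along the first one, can be augmented.
-/

namespace Mader

section Lists

variable {α : Type*} {R : α → α → Prop} {P : List (List α)} {l A B D R₁ R₂ : List α} {x y : α}

open Classical in
/-- The number of consecutive pairs of a list which are not related by `R`. It measures how much
a family of paths deviates from another one when `R` is adjacency along the latter. -/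
noncomputable def deviation (R : α → α → Prop) : List α → ℕ
  | [] => 0
  | [_] => 0
  | x :: y :: l => (if R x y then 0 else 1) + deviation R (y :: l)

theorem deviation_append_cons (A : List α) (x : α) (B : List α) :
    deviation R (A ++ x :: B) = deviation R (A ++ [x]) + deviation R (x :: B) := by
  induction A with
  | nil => simp [deviation]
  | cons a A ih =>
    cases A with
    | nil => simp [deviation]
    | cons a' A =>
      simp only [List.cons_append, deviation] at ih ⊢
      omega

theorem deviation_reverse (hR : ∀ ⦃x y⦄, R x y → R y x) (l : List α) :
    deviation R l.reverse = deviation R l := by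
  induction l with
  | nil => rfl
  | cons x l ih =>
    cases l with
    | nil => rfl
    | cons y l =>
      rw [List.reverse_cons, List.reverse_cons, List.append_assoc, List.singleton_append,
        deviation_append_cons, ← List.reverse_cons, ih]
      have hxy : R y x ↔ R x y := ⟨@hR y x, @hR x y⟩
      by_cases h : R x y <;> simp only [deviation, hxy, h] <;> grind

theorem deviation_le_of_infix (h : A <:+: B) : deviation R A ≤ deviation R B := by
  obtain ⟨C, D, rfl⟩ := h
  rcases A with _ | ⟨x, A⟩
  · simp [deviation]
  have hA : deviation R (x :: A) ≤ deviation R (x :: (A ++ D)) := by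
    induction A generalizing x with
    | nil => simp [deviation]
    | cons y A ih => simpa [deviation] using ih y
  rw [List.append_assoc, List.cons_append, deviation_append_cons]
  omega

theorem deviation_eq_zero : deviation R l = 0 ↔ l.IsChain R := by
  induction l with
  | nil => simp [deviation]
  | cons x l ih =>
    cases l with
    | nil => simp [deviation]
    | cons y l => simp [deviation, ih]

/-- `x` and `y` are consecutive, in either order, on a list of the family `P`. -/
def Linked (P : List (List α)) (x y : α) : Prop :=
  ∃ l ∈ P, [x, y] <:+: l ∨ [y, x] <:+: l

theorem Linked.symm (h : Linked P x y) : Linked P y x :=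
  let ⟨l, hl, hxy⟩ := h
  ⟨l, hl, hxy.symm⟩

theorem pair_infix_reverse : [x, y] <:+: l.reverse ↔ [y, x] <:+: l := by
  rw [← List.reverse_infix, List.reverse_reverse]
  rfl

theorem exists_first_of_mem {p : α → Prop} (h : ∃ x ∈ l, p x) :
    ∃ R₁ x R₂, l = R₁ ++ x :: R₂ ∧ p x ∧ ∀ y ∈ R₁, ¬ p y := by
  classical
  obtain ⟨x, hx⟩ := Option.isSome_iff_exists.1 (List.find?_isSome (p := fun x => decide (p x)).2
    (by simpa using h))
  obtain ⟨hpx, R₁, R₂, hl, hR₁⟩ := List.find?_eq_some_iff_append.1 hx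
  exact ⟨R₁, x, R₂, hl, by simpa using hpx, by simpa using hR₁⟩

theorem prefix_of_append_cons_eq_concat (h : A ++ x :: B = D ++ [y]) : A <+: D := by
  have hdrop := congrArg List.dropLast h
  rw [List.dropLast_append_cons, List.dropLast_concat] at hdrop
  exact ⟨_, hdrop⟩

theorem nodup_flatten_cons : (l :: P).flatten.Nodup ↔
    l.Nodup ∧ P.flatten.Nodup ∧ ∀ x ∈ l, x ∉ P.flatten := by
  rw [List.flatten_cons, List.nodup_append', List.disjoint_left]

theorem eq_of_mem_of_nodup_flatten {l l' : List α} (hP : P.flatten.Nodup) (hl : l ∈ P)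
    (hl' : l' ∈ P) (hx : x ∈ l) (hx' : x ∈ l') : l = l' := by
  by_contra hne
  have : Std.Symm (List.Disjoint (α := α)) := ⟨fun _ _ => List.Disjoint.symm⟩
  exact (List.nodup_flatten.1 hP).2.forall hl hl' hne hx hx'

theorem exists_perm_cons_of_mem_flatten (hx : x ∈ P.flatten) :
    ∃ l F, x ∈ l ∧ P.Perm (l :: F) := by
  obtain ⟨l, hl, hxl⟩ := List.mem_flatten.1 hx
  obtain ⟨S, S', rfl⟩ := List.append_of_mem hl
  exact ⟨l, S ++ S', hxl, List.perm_middle⟩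

theorem Linked.infix_of_mem (hP : P.flatten.Nodup) (hl : l ∈ P ∨ l.reverse ∈ P) (hx : x ∈ l)
    (h : Linked P x y) : [x, y] <:+: l ∨ [y, x] <:+: l := by
  obtain ⟨l', hl', hxy⟩ := h
  have hx' : x ∈ l' := hxy.elim (fun h => h.subset (by simp)) (fun h => h.subset (by simp))
  rcases hl with hl | hl
  · rwa [eq_of_mem_of_nodup_flatten hP hl hl' hx hx']
  · rwa [← eq_of_mem_of_nodup_flatten hP hl hl' (List.mem_reverse.2 hx) hx', pair_infix_reverse,
      pair_infix_reverse, or_comm] at hxy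

theorem isChain_linked (hl : l ∈ P ∨ l.reverse ∈ P) : l.IsChain (Linked P) := by
  refine List.isChain_isInfix l |>.imp fun x y hxy => ?_
  rcases hl with hl | hl
  · exact ⟨l, hl, Or.inl hxy⟩
  · exact ⟨_, hl, Or.inr (pair_infix_reverse.2 hxy)⟩

theorem nodup_of_mem_or_reverse_mem (hP : P.flatten.Nodup) (hl : l ∈ P ∨ l.reverse ∈ P) :
    l.Nodup := by
  rcases hl with hl | hl
  · exact (List.nodup_flatten.1 hP).1 _ hl
  · exact List.nodup_reverse.1 ((List.nodup_flatten.1 hP).1 _ hl)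

theorem prefix_of_isChain_linked (hP : P.flatten.Nodup)
    (hl : R₁ ++ x :: R₂ ∈ P ∨ (R₁ ++ x :: R₂).reverse ∈ P) (hD : (x :: D).IsChain (Linked P))
    (hnodup : (x :: D).Nodup) (hdisj : ∀ y ∈ D, y ∉ R₁) : D <+: R₂ := by
  induction D generalizing R₁ x R₂ with
  | nil => exact List.nil_prefix
  | cons y D ih =>
    have hl_nodup := nodup_of_mem_or_reverse_mem hP hl
    rw [List.isChain_cons_cons] at hD
    rcases hD.1.infix_of_mem hP hl (by simp) with ⟨A, B, h⟩ | ⟨A, B, h⟩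
    · obtain ⟨rfl, -, rfl⟩ : A = R₁ ∧ x = x ∧ y :: B = R₂ := by
        rw [← List.append_cons_inj_of_notMem]
        · simpa using h
        all_goals grind
      refine (List.prefix_cons_inj _).2 (ih (R₁ := A ++ [x]) (by simpa using hl) hD.2 ?_ ?_)
      · exact hnodup.of_cons
      · grind
    · obtain ⟨rfl, -⟩ : A ++ [y] = R₁ ∧ x = x ∧ B = R₂ := by
        rw [← List.append_cons_inj_of_notMem]
        · simpa using h
        all_goals grind
      simp at hdisj

theorem deviation_reroute_lt (hP : P.flatten.Nodup)
    (hl : R₁ ++ x :: R₂ ∈ P ∨ (R₁ ++ x :: R₂).reverse ∈ P) (hQ : (A ++ x :: B).Nodup)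
    (hA : ∀ a ∈ A, a ∉ R₁) (hhead : ∀ a ∈ (A ++ [x]).head?, a ∉ R₁ ++ x :: R₂) :
    deviation (Linked P) (R₁ ++ x :: B) < deviation (Linked P) (A ++ x :: B) := by
  have hR₁ : deviation (Linked P) (R₁ ++ [x]) = 0 := by
    refine deviation_eq_zero.2 ((isChain_linked hl).prefix ?_)
    simp
  suffices hne : deviation (Linked P) (A ++ [x]) ≠ 0 by
    grind [deviation_append_cons]
  intro h0
  have hprefix : A.reverse <+: R₂ := by
    refine prefix_of_isChain_linked (x := x) hP hl ?_ ?_ (by simpa using hA)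
    · rw [← List.reverse_concat, ← deviation_eq_zero, deviation_reverse fun _ _ => Linked.symm]
      exact h0
    · rw [← List.reverse_concat, List.nodup_reverse]
      exact hQ.sublist (by simp)
  cases A with
  | nil => simp at hhead
  | cons a A =>
    have : a ∈ R₂ := hprefix.subset (by simp)
    simp [this] at hhead

end Lists

section ColourPaths

variable {α C : Type*} {adj : α → α → Prop} {col : α → Option C} {c : C} {a b p q r s u x x₁ : α}
  {l q₀ A B Q R R₁ R₂ : List α} {L L' P Ps Qs : List (List α)} {k n : ℕ}

/-- `l` is a path from the coloured element `a` to the coloured element `b` whose interior is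
uncoloured. -/
structure Strand (adj : α → α → Prop) (col : α → Option C) (a b : α) (l : List α) : Prop where
  chain : l.IsChain adj
  eq_cons_concat : ∃ m, l = a :: (m ++ [b]) ∧ ∀ x ∈ m, col x = none
  head_coloured : col a ≠ none
  last_coloured : col b ≠ none

/-- A path between elements of different colours whose interior is uncoloured: the analogue of a
`T`-path for a relation `adj` on partially coloured elements. -/
def ColourPath (adj : α → α → Prop) (col : α → Option C) (l : List α) : Prop :=
  ∃ a b, Strand adj col a b l ∧ col a ≠ col b

/-- A system of pairwise disjoint colour paths. -/
structure IsPacking (adj : α → α → Prop) (col : α → Option C) (L : List (List α)) : Prop where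
  nodup : L.flatten.Nodup
  colourPath : ∀ l ∈ L, ColourPath adj col l

/-- There are `k` pairwise disjoint colour paths. -/
def HasPacking (adj : α → α → Prop) (col : α → Option C) (k : ℕ) : Prop :=
  ∃ L, IsPacking adj col L ∧ L.length = k

/-- A path from `u` to an element of a colour other than `c` which has no other coloured element;
it becomes a colour path once a neighbour of colour `c` is put in front of `u`. -/
structure Stub (adj : α → α → Prop) (col : α → Option C) (c : C) (u : α) (l : List α) : Prop where
  chain : l.IsChain adj
  head : l.head? = some u
  eq_concat : ∃ m b, l = m ++ [b] ∧ (∀ x ∈ m, col x = none) ∧ col b ≠ none ∧ col b ≠ some c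

/-- A stub together with colour paths, all of them pairwise disjoint. -/
structure IsStubPacking (adj : α → α → Prop) (col : α → Option C) (c : C) (u : α) (q₀ : List α)
    (Qs : List (List α)) : Prop where
  nodup : (q₀ :: Qs).flatten.Nodup
  stub : Stub adj col c u q₀
  colourPath : ∀ l ∈ Qs, ColourPath adj col l

theorem Strand.head_mem (h : Strand adj col a b l) : a ∈ l := by
  obtain ⟨m, rfl, -⟩ := h.eq_cons_concat
  simp

theorem Strand.last_mem (h : Strand adj col a b l) : b ∈ l := by
  obtain ⟨m, rfl, -⟩ := h.eq_cons_concat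
  simp

theorem Strand.eq_or_eq_of_mem (h : Strand adj col a b l) (hx : x ∈ l) (hcol : col x ≠ none) :
    x = a ∨ x = b := by
  obtain ⟨m, rfl, hm⟩ := h.eq_cons_concat
  grind

theorem Strand.reverse (hadj : ∀ ⦃x y⦄, adj x y → adj y x) (h : Strand adj col a b l) :
    Strand adj col b a l.reverse where
  chain := List.isChain_reverse.2 (h.chain.imp fun _ _ hxy => hadj hxy)
  eq_cons_concat := by
    obtain ⟨m, rfl, hm⟩ := h.eq_cons_concat
    exact ⟨m.reverse, by simp, by simpa using hm⟩
  head_coloured := h.last_coloured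
  last_coloured := h.head_coloured

theorem Strand.head?_eq (h : Strand adj col a b l) : l.head? = some a := by
  obtain ⟨m, rfl, -⟩ := h.eq_cons_concat
  rfl

theorem Strand.getLast?_eq (h : Strand adj col a b l) : l.getLast? = some b := by
  obtain ⟨m, rfl, -⟩ := h.eq_cons_concat
  rw [← List.cons_append, List.getLast?_concat]

theorem ColourPath.exists_strand (hadj : ∀ ⦃x y⦄, adj x y → adj y x) (h : ColourPath adj col l)
    (hx : x ∈ l) (hcol : col x ≠ none) : ∃ l' b, (l' = l ∨ l' = l.reverse) ∧
      Strand adj col x b l' ∧ col b ≠ col x := by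
  obtain ⟨a, b, hab, hne⟩ := h
  rcases hab.eq_or_eq_of_mem hx hcol with rfl | rfl
  · exact ⟨l, b, Or.inl rfl, hab, hne.symm⟩
  · exact ⟨l.reverse, a, Or.inr rfl, hab.reverse hadj, hne⟩

theorem Strand.countP_coloured [DecidablePred fun x => col x ≠ none] (h : Strand adj col a b l) :
    l.countP (fun x => col x ≠ none) = 2 := by
  obtain ⟨m, rfl, hm⟩ := h.eq_cons_concat
  have hm0 : m.countP (fun x => col x ≠ none) = 0 := List.countP_eq_zero.2 (by simpa using hm)
  simpa [List.countP_cons, List.countP_append, h.head_coloured, h.last_coloured] using hm0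

theorem Stub.countP_coloured [DecidablePred fun x => col x ≠ none] (h : Stub adj col c u l) :
    l.countP (fun x => col x ≠ none) = 1 := by
  obtain ⟨m, b, rfl, hm, hb, -⟩ := h.eq_concat
  have hm0 : m.countP (fun x => col x ≠ none) = 0 := List.countP_eq_zero.2 (by simpa using hm)
  simpa [List.countP_cons, List.countP_append, hb] using hm0

theorem exists_colourPath_infix (hl : l.IsChain adj) (ha : a ∈ l) (hb : b ∈ l)
    (ha_col : col a ≠ none) (hb_col : col b ≠ none) (hab : col a ≠ col b) :
    ∃ D, D <:+: l ∧ ColourPath adj col D := by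
  induction l generalizing a b with
  | nil => simp at ha
  | cons x l ih =>
    wlog hxb : b ∈ l generalizing a b
    · have hxa : a ∈ l := by grind
      exact this hb ha hb_col ha_col hab.symm hxa
    have hl_ih : a ∈ l → ∃ D, D <:+: x :: l ∧ ColourPath adj col D := fun hxa =>
      (ih hl.tail hxa hxb ha_col hb_col hab).imp fun D hD => ⟨List.infix_cons hD.1, hD.2⟩
    rcases List.mem_cons.1 ha with rfl | hxa
    · obtain ⟨m, y, S, rfl, hy, hm⟩ :=
        exists_first_of_mem (p := fun y => col y ≠ none) ⟨b, hxb, hb_col⟩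
      by_cases hay : col a = col y
      · obtain ⟨D, hD, hDcol⟩ := ih (a := y) (b := b) hl.tail (by simp) hxb hy hb_col (hay ▸ hab)
        exact ⟨D, List.infix_cons hD, hDcol⟩
      · have hinfix : a :: (m ++ [y]) <:+: a :: (m ++ y :: S) := ⟨[], S, by simp⟩
        exact ⟨_, hinfix, a, y, ⟨hl.infix hinfix, ⟨m, rfl, by simpa using hm⟩, ha_col, hy⟩, hay⟩
    · exact hl_ih hxa

theorem IsPacking.perm (h : IsPacking adj col L) (hL : L.Perm L') : IsPacking adj col L' :=
  ⟨hL.flatten.nodup_iff.1 h.nodup, fun l hl => h.colourPath l (hL.mem_iff.2 hl)⟩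

theorem HasPacking.mono (h : HasPacking adj col k) (hn : n ≤ k) : HasPacking adj col n := by
  obtain ⟨L, hL, rfl⟩ := h
  refine ⟨L.take n, ⟨?_, fun l hl => hL.colourPath l (List.mem_of_mem_take hl)⟩, by simpa⟩
  exact hL.nodup.sublist (List.take_sublist n L).flatten

theorem IsStubPacking.perm {Qs'} (h : IsStubPacking adj col c u q₀ Qs) (hQs : Qs.Perm Qs') :
    IsStubPacking adj col c u q₀ Qs' :=
  ⟨(hQs.cons q₀).flatten.nodup_iff.1 h.nodup, h.stub,
    fun l hl => h.colourPath l (hQs.mem_iff.2 hl)⟩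

theorem countP_coloured_flatten [DecidablePred fun x => col x ≠ none]
    (hL : ∀ l ∈ L, ColourPath adj col l) :
    L.flatten.countP (fun x => col x ≠ none) = 2 * L.length := by
  induction L with
  | nil => simp
  | cons l L ih =>
    obtain ⟨a, b, hl, -⟩ := hL l (by simp)
    rw [List.flatten_cons, List.countP_append, hl.countP_coloured,
      ih fun l' hl' => hL l' (by simp [hl']), List.length_cons]
    omega

theorem IsStubPacking.exists_coloured_not_mem (h : IsStubPacking adj col c u q₀ Qs)
    (hP : (l :: Ps).flatten.Nodup) (hl : Strand adj col a b l)
    (hPs : ∀ l ∈ Ps, ColourPath adj col l) (hlen : Qs.length = Ps.length) :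
    ∃ r ∈ (l :: Ps).flatten, col r ≠ none ∧ r ∉ (q₀ :: Qs).flatten := by
  classical
  by_contra! hsub
  have hle := List.subperm_of_subset (hP.filter fun x => decide (col x ≠ none))
    (l₂ := (q₀ :: Qs).flatten.filter fun x => decide (col x ≠ none)) (by
      intro x hx
      simp only [List.mem_filter] at hx ⊢
      exact ⟨hsub x hx.1 (by simpa using hx.2), hx.2⟩) |>.length_le
  rw [← List.countP_eq_length_filter, ← List.countP_eq_length_filter, List.flatten_cons,
    List.flatten_cons, List.countP_append, List.countP_append, countP_coloured_flatten hPs,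
    countP_coloured_flatten h.colourPath, hlen] at hle
  grind [hl.countP_coloured, h.stub.countP_coloured]

theorem Strand.reroute (hQ : Strand adj col p q Q) (hqr : col q ≠ col r)
    (hpb : p = b → col b = col r) (hQ_nodup : Q.Nodup) (hP : P.flatten.Nodup)
    (hl : R₁ ++ x :: R₂ ∈ P ∨ (R₁ ++ x :: R₂).reverse ∈ P)
    (hstrand : Strand adj col r b (R₁ ++ x :: R₂)) (hx : x ∈ Q) (hr : r ∈ R₁)
    (hR₁ : ∀ y ∈ R₁, y ∉ Q) (hxb : x = b → col b ≠ col r) :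
    ∃ D, ColourPath adj col D ∧ D.Nodup ∧ (∀ y ∈ D, y ∈ R₁ ∨ y ∈ Q) ∧
      (deviation (Linked P) D < deviation (Linked P) Q ∨ b ∈ Q ∧ b ∉ D ∧ col b = col r) := by
  have hl_nodup := nodup_of_mem_or_reverse_mem hP hl
  obtain ⟨A, B, rfl⟩ := List.append_of_mem hx
  have hchain : (R₁ ++ x :: B).IsChain adj :=
    List.isChain_split.2
      ⟨(List.isChain_split.1 hstrand.chain).1, (List.isChain_split.1 hQ.chain).2⟩
  have hq : q ∈ x :: B := by
    refine List.mem_of_getLast? ?_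
    rw [← List.getLast?_append_cons A, hQ.getLast?_eq]
  obtain ⟨D, hD, hDcol⟩ := exists_colourPath_infix hchain (List.mem_append_left _ hr)
    (List.mem_append_right _ hq) hstrand.head_coloured hQ.last_coloured hqr.symm
  have hnodup : (R₁ ++ x :: B).Nodup := by
    grind
  refine ⟨D, hDcol, hnodup.sublist hD.sublist, fun y hy => ?_, ?_⟩
  · grind [hD.subset hy]
  by_cases hp : p ∈ R₁ ++ x :: R₂
  · obtain rfl : p = b :=
      (hstrand.eq_or_eq_of_mem hp hQ.head_coloured).resolve_left (by grind [hQ.head_mem])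
    refine Or.inr ⟨hQ.head_mem, fun hpD => ?_, hpb rfl⟩
    have hpA : p ∈ A := by
      have := hQ.head?_eq
      cases A <;> grind
    grind [hD.subset hpD, hQ.head_mem]
  · have hhead := hQ.head?_eq
    refine Or.inl ((deviation_le_of_infix hD).trans_lt
      (deviation_reroute_lt hP hl hQ_nodup (by grind) ?_))
    cases A <;> grind

/-- Follow a path of `P` from `r` to its first element `x` on `Q` and then continue along `Q` in the
direction which ends in a colour other than that of `r`. -/
theorem ColourPath.reroute (hadj : ∀ ⦃x y⦄, adj x y → adj y x) (hQ : ColourPath adj col Q)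
    (hQ_nodup : Q.Nodup) (hP : P.flatten.Nodup)
    (hl : R₁ ++ x :: R₂ ∈ P ∨ (R₁ ++ x :: R₂).reverse ∈ P)
    (hstrand : Strand adj col r b (R₁ ++ x :: R₂)) (hx : x ∈ Q) (hr : r ∈ R₁)
    (hR₁ : ∀ y ∈ R₁, y ∉ Q) (hxb : x = b → col b ≠ col r) :
    ∃ D, ColourPath adj col D ∧ D.Nodup ∧ (∀ y ∈ D, y ∈ R₁ ∨ y ∈ Q) ∧
      (deviation (Linked P) D < deviation (Linked P) Q ∨ b ∈ Q ∧ b ∉ D ∧ col b = col r) := by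
  -- Of the two ends of `Q` that may serve as the start, `b` is avoided unless it has the colour
  -- of `r`.
  obtain ⟨p, q, hpq, hqr, hpb⟩ :
      ∃ p q, (Strand adj col p q Q ∨ Strand adj col p q Q.reverse) ∧
        col q ≠ col r ∧ (p = b → col b = col r) := by
    obtain ⟨p, q, hpq, hne⟩ := hQ
    by_cases hgood : col q ≠ col r ∧ (p = b → col b = col r)
    · exact ⟨p, q, Or.inl hpq, hgood⟩
    · exact ⟨q, p, Or.inr (hpq.reverse hadj), by grind⟩
  rcases hpq with hpq | hpq
  · exact hpq.reroute hqr hpb hQ_nodup hP hl hstrand hx hr hR₁ hxb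
  · have hrev := hpq.reroute hqr hpb (List.nodup_reverse.2 hQ_nodup) hP hl hstrand
      (by simpa using hx) hr (by simpa using hR₁) hxb
    simpa only [List.mem_reverse, deviation_reverse fun _ _ => Linked.symm] using hrev

theorem Strand.exists_eq_cons_of_append_cons (h : Strand adj col a b (A ++ x :: B)) (ha : a ∈ A) :
    ∃ R, A = a :: R ∧ ∀ y ∈ R, col y = none := by
  obtain ⟨m, hm, hm_col⟩ := h.eq_cons_concat
  cases A with
  | nil => simp at ha
  | cons a' R =>
    obtain ⟨rfl, hRm⟩ := List.cons_eq_cons.1 hm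
    exact ⟨R, rfl, fun y hy => hm_col y ((prefix_of_append_cons_eq_concat hRm).subset hy)⟩

theorem Stub.turn (hadj : ∀ ⦃x y⦄, adj x y → adj y x) (hQ : Stub adj col c u (A ++ x :: B))
    (hx : col x = none) (hR : (r :: (R ++ [x])).IsChain adj) (hR_col : ∀ y ∈ R, col y = none)
    (hr : col r ≠ none) (hrc : col r ≠ some c) :
    Stub adj col c u (A ++ x :: (r :: R).reverse) where
  chain := by
    refine List.isChain_split.2 ⟨(List.isChain_split.1 hQ.chain).1, ?_⟩
    simpa [flip] using List.isChain_reverse.2 (hR.imp fun _ _ h => hadj h)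
  head := by
    rw [← hQ.head]
    cases A <;> rfl
  eq_concat := by
    obtain ⟨m, q, h, hm, -⟩ := hQ.eq_concat
    refine ⟨A ++ x :: R.reverse, r, by simp, ?_, hr, hrc⟩
    grind [(prefix_of_append_cons_eq_concat h).subset]

/-- Follow a path of `P` from `r` to its first element `x` on the stub. If the stub ends in a colour
other than that of `r`, this closes up to a colour path; otherwise turn round at `x`. -/
theorem Stub.reroute (hadj : ∀ ⦃x y⦄, adj x y → adj y x) (hQ : Stub adj col c u Q)
    (hQ_nodup : Q.Nodup) (hP : P.flatten.Nodup)
    (hl : R₁ ++ x :: R₂ ∈ P ∨ (R₁ ++ x :: R₂).reverse ∈ P)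
    (hstrand : Strand adj col r b (R₁ ++ x :: R₂)) (hx : x ∈ Q) (hr : r ∈ R₁)
    (hR₁ : ∀ y ∈ R₁, y ∉ Q) (hrb : col b = col r → col r = some c) :
    ∃ D, D.Nodup ∧ (∀ y ∈ D, y ∈ R₁ ∨ y ∈ Q) ∧ (ColourPath adj col D ∨
      Stub adj col c u D ∧ deviation (Linked P) D < deviation (Linked P) Q) := by
  have hl_nodup := nodup_of_mem_or_reverse_mem hP hl
  obtain ⟨m, q, hQmq, hm, hq_col, hqc⟩ := hQ.eq_concat
  have hchain_Q := hQ.chain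
  have hhead := hQ.head
  have hlast : Q.getLast? = some q := by rw [hQmq, List.getLast?_concat]
  obtain ⟨A, B, rfl⟩ := List.append_of_mem hx
  have hq : q ∈ x :: B := List.mem_of_getLast? (by rw [← List.getLast?_append_cons A, hlast])
  by_cases hqr : col q = col r
  · have hq_l : q ∉ R₁ ++ x :: R₂ := fun hmem => by
      grind [hstrand.eq_or_eq_of_mem hmem hq_col]
    have hx_col : col x = none := by grind
    obtain ⟨R, rfl, hR⟩ := hstrand.exists_eq_cons_of_append_cons hr
    have hnodup : (A ++ x :: (r :: R).reverse).Nodup := by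
      rw [List.nodup_append, List.nodup_cons, List.nodup_reverse]
      grind
    refine ⟨A ++ x :: (r :: R).reverse, hnodup, by grind, Or.inr ⟨?_, ?_⟩⟩
    · refine hQ.turn hadj hx_col ?_ hR hstrand.head_coloured (hqr ▸ hqc)
      exact hstrand.chain.infix ⟨[], R₂, by simp⟩
    · have hlt := deviation_reroute_lt (A := B.reverse) (B := A.reverse) hP hl
        (by simpa using List.nodup_reverse.2 hQ_nodup) (by grind) (fun z hz => ?_)
      · rw [← deviation_reverse fun _ _ => Linked.symm,
          ← deviation_reverse (l := A ++ x :: B) fun _ _ => Linked.symm]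
        simpa using hlt
      · rw [← List.reverse_cons, List.head?_reverse, ← List.getLast?_append_cons A, hlast] at hz
        exact Option.some_injective _ hz ▸ hq_l
  · have hchain : (R₁ ++ x :: B).IsChain adj :=
      List.isChain_split.2
        ⟨(List.isChain_split.1 hstrand.chain).1, (List.isChain_split.1 hQ.chain).2⟩
    obtain ⟨D, hD, hDcol⟩ := exists_colourPath_infix hchain (List.mem_append_left _ hr)
      (List.mem_append_right _ hq) hstrand.head_coloured hq_col (Ne.symm hqr)
    have hnodup : (R₁ ++ x :: B).Nodup := by grind
    exact ⟨D, hnodup.sublist hD.sublist, fun y hy => by grind [hD.subset hy], Or.inl hDcol⟩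

/-- The total deviation of a family of paths from the family `P`. -/
noncomputable def totalDeviation (P F : List (List α)) : ℕ :=
  (F.map (deviation (Linked P))).sum

theorem totalDeviation_cons (P F : List (List α)) (l : List α) :
    totalDeviation P (l :: F) = deviation (Linked P) l + totalDeviation P F := rfl

theorem totalDeviation_perm (h : L.Perm L') : totalDeviation P L = totalDeviation P L' :=
  (h.map _).sum_nat

theorem IsStubPacking.reroute (hadj : ∀ ⦃x y⦄, adj x y → adj y x)
    (h : IsStubPacking adj col c u q₀ Qs) (hP : P.flatten.Nodup)
    (hl : R₁ ++ x :: R₂ ∈ P ∨ (R₁ ++ x :: R₂).reverse ∈ P)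
    (hstrand : Strand adj col r b (R₁ ++ x :: R₂)) (hx : x ∈ (q₀ :: Qs).flatten) (hr : r ∈ R₁)
    (hR₁ : ∀ y ∈ R₁, y ∉ (q₀ :: Qs).flatten) (hrb : col b = col r → col r = some c)
    (hxb : x = b → x ∈ Qs.flatten → col b ≠ col r) :
    HasPacking adj col (Qs.length + 1) ∨
      ∃ q₀' Qs', IsStubPacking adj col c u q₀' Qs' ∧ Qs'.length = Qs.length ∧
        (totalDeviation P (q₀' :: Qs') < totalDeviation P (q₀ :: Qs) ∨
          b ∉ (q₀' :: Qs').flatten ∧ col b = col r) := by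
  obtain ⟨hq₀, hQs, hdisj⟩ := nodup_flatten_cons.1 h.nodup
  rw [List.flatten_cons, List.mem_append] at hx
  rcases hx with hx | hx
  · obtain ⟨D, hD, hDsub, hDcol | ⟨hDstub, hdev⟩⟩ :=
      h.stub.reroute hadj hq₀ hP hl hstrand hx hr (by grind) hrb
    · refine Or.inl ⟨D :: Qs, ⟨nodup_flatten_cons.2 ⟨hD, hQs, by grind⟩, ?_⟩, rfl⟩
      grind [h.colourPath]
    · refine Or.inr ⟨D, Qs, ⟨nodup_flatten_cons.2 ⟨hD, hQs, by grind⟩, hDstub, h.colourPath⟩,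
        rfl, Or.inl ?_⟩
      simpa only [totalDeviation_cons, Nat.add_lt_add_iff_right]
  · obtain ⟨Q, Qs', hxQ, hperm⟩ := exists_perm_cons_of_mem_flatten hx
    have h' := h.perm hperm
    obtain ⟨-, hrest, hdisj'⟩ := nodup_flatten_cons.1 h'.nodup
    obtain ⟨hQ, hQs', hdisjQ⟩ := nodup_flatten_cons.1 hrest
    have hmem : ∀ y, y ∈ Qs.flatten ↔ y ∈ Q ∨ y ∈ Qs'.flatten := fun y => by
      rw [hperm.flatten.mem_iff, List.flatten_cons, List.mem_append]
    obtain ⟨D, hDcol, hD, hDsub, hdev⟩ := (h'.colourPath Q (by simp)).reroute hadj hQ hP hl hstrand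
      hxQ hr (by grind) fun h => hxb h hx
    refine Or.inr ⟨q₀, D :: Qs', ⟨nodup_flatten_cons.2 ⟨hq₀, nodup_flatten_cons.2
      ⟨hD, hQs', by grind⟩, by grind⟩, h.stub, by grind [h'.colourPath]⟩,
      by simp [hperm.length_eq], ?_⟩
    rcases hdev with hdev | ⟨hbQ, hbD, hbr⟩
    · left
      rw [totalDeviation_perm (hperm.cons q₀)]
      simp only [totalDeviation_cons]
      omega
    · right
      grind

theorem IsStubPacking.hasPacking_of_not_mem (h : IsStubPacking adj col c u q₀ Qs)
    (hsu : adj s u) (hs : col s = some c) (hmem : s ∉ (q₀ :: Qs).flatten) :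
    HasPacking adj col (Qs.length + 1) := by
  refine ⟨(s :: q₀) :: Qs, ⟨?_, ?_⟩, rfl⟩
  · rw [List.flatten_cons, List.cons_append, ← List.flatten_cons, List.nodup_cons]
    exact ⟨hmem, h.nodup⟩
  · obtain ⟨m, q, rfl, hm, hq, hqc⟩ := h.stub.eq_concat
    have hchain : (s :: (m ++ [q])).IsChain adj :=
      h.stub.chain.cons fun y hy => by
        rw [h.stub.head] at hy
        exact Option.some_injective _ hy ▸ hsu
    rintro l (_ | ⟨_, hl⟩)
    · exact ⟨s, q, ⟨hchain, ⟨m, rfl, hm⟩, by simp [hs], hq⟩, hs ▸ Ne.symm hqc⟩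
    · exact h.colourPath l hl

/-- As the stub packing avoids the strand up to `x₁`, go along the strand from `t` to `x₁` and pass
over to the stub. -/
theorem IsStubPacking.hasPacking_of_strand (h : IsStubPacking adj col c u q₀ Qs)
    {t : α} (hstrand : Strand adj col t s (R ++ [x₁, s])) (hR : (R ++ [x₁]).Nodup) (hx₁u : adj x₁ u)
    (ht : col t = some c) (hmem : ∀ y ∈ R ++ [x₁], y ∉ (q₀ :: Qs).flatten) :
    HasPacking adj col (Qs.length + 1) := by
  obtain ⟨hq₀, hQs, hdisj⟩ := nodup_flatten_cons.1 h.nodup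
  obtain ⟨m, q, hmq, hm, hq, hqc⟩ := h.stub.eq_concat
  have hchain : (R ++ [x₁] ++ q₀).IsChain adj := by
    refine (hstrand.chain.prefix ⟨[s], by simp⟩).append h.stub.chain ?_
    simpa [h.stub.head] using hx₁u
  have ht_mem : t ∈ R ++ [x₁] := by
    have := hstrand.head?_eq
    cases R <;> grind
  obtain ⟨D, hD, hDcol⟩ := exists_colourPath_infix (a := t) (b := q) hchain
    (List.mem_append_left _ ht_mem) (by grind) (by simp [ht]) hq (ht ▸ hqc.symm)
  have hnodup : (R ++ [x₁] ++ q₀).Nodup := by grind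
  refine ⟨D :: Qs, ⟨nodup_flatten_cons.2 ⟨hnodup.sublist hD.sublist, hQs, ?_⟩, ?_⟩, rfl⟩
  · grind [hD.subset]
  · grind [h.colourPath]

theorem IsStubPacking.hasPacking_or_exists_lt_of_strand (hadj : ∀ ⦃x y⦄, adj x y → adj y x)
    (h : IsStubPacking adj col c u q₀ Qs) {t : α} (hP : P.flatten.Nodup) (hl : s :: x₁ :: R ∈ P)
    (hstrand : Strand adj col s t (s :: x₁ :: R)) (hs : col s = some c) (ht : col t = some c)
    (hsu : adj s u) (hx₁u : adj x₁ u) (hsF : s ∈ (q₀ :: Qs).flatten)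
    (htF : t ∉ (q₀ :: Qs).flatten) :
    HasPacking adj col (Qs.length + 1) ∨ ∃ q₀' Qs', IsStubPacking adj col c u q₀' Qs' ∧
      Qs'.length = Qs.length ∧ totalDeviation P (q₀' :: Qs') < totalDeviation P (q₀ :: Qs) := by
  have hrev := hstrand.reverse hadj
  obtain ⟨R₁, x, R₂, hsplit, hx, hR₁⟩ := exists_first_of_mem
    (p := (· ∈ (q₀ :: Qs).flatten)) ⟨s, hrev.last_mem, hsF⟩
  have hsplit_nodup : (R₁ ++ x :: R₂).Nodup := by
    rw [← hsplit, List.nodup_reverse]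
    exact nodup_of_mem_or_reverse_mem hP (Or.inl hl)
  by_cases hturn : x = s ∧ x ∈ Qs.flatten
  · obtain ⟨rfl, -⟩ := hturn
    have hsplit' : R.reverse ++ [x₁] ++ x :: [] = R₁ ++ x :: R₂ := by simpa using hsplit
    obtain ⟨hR₁_eq, -⟩ := (List.append_cons_inj_of_notMem (by grind) (by grind)).1 hsplit'
    exact Or.inl <| h.hasPacking_of_strand (R := R.reverse) (x₁ := x₁) (t := t)
      (by simpa using hrev) (by grind) hx₁u ht (by grind)
  · rw [hsplit] at hrev
    have ht_mem : t ∈ R₁ := by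
      have := hrev.head?_eq
      cases R₁ <;> grind
    rcases h.reroute hadj hP (Or.inr (by simpa [← hsplit])) hrev hx ht_mem hR₁ (fun _ => ht)
      (fun hxs hxQs => absurd ⟨hxs, hxQs⟩ hturn) with h' | ⟨q, Q, h', hlen', hlt | ⟨hs', -⟩⟩
    · exact Or.inl h'
    · exact Or.inr ⟨q, Q, h', hlen', hlt⟩
    · exact Or.inl (hlen' ▸ h'.hasPacking_of_not_mem hsu hs hs')

theorem IsStubPacking.hasPacking_or_exists_lt_of_colourPath (hadj : ∀ ⦃x y⦄, adj x y → adj y x)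
    (h : IsStubPacking adj col c u q₀ Qs) (hP : P.flatten.Nodup) (hl : l ∈ P)
    (hl_col : ColourPath adj col l) (hrl : r ∈ l) (hr_col : col r ≠ none)
    (hrF : r ∉ (q₀ :: Qs).flatten) :
    HasPacking adj col (Qs.length + 1) ∨ ∃ q₀' Qs', IsStubPacking adj col c u q₀' Qs' ∧
      Qs'.length = Qs.length ∧ totalDeviation P (q₀' :: Qs') < totalDeviation P (q₀ :: Qs) := by
  obtain ⟨l', b, hl'_eq, hl'_strand, hb⟩ := hl_col.exists_strand hadj hrl hr_col
  have hl' : l' ∈ P ∨ l'.reverse ∈ P := by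
    rcases hl'_eq with rfl | rfl <;> simp [hl]
  by_cases hmeet : ∃ x ∈ l', x ∈ (q₀ :: Qs).flatten
  · obtain ⟨R₁, x, R₂, rfl, hx, hR₁⟩ := exists_first_of_mem hmeet
    have hr : r ∈ R₁ := by
      have := hl'_strand.head?_eq
      cases R₁ <;> grind
    rcases h.reroute hadj hP hl' hl'_strand hx hr hR₁ (fun hbr => absurd hbr hb) (fun _ _ => hb)
      with h' | ⟨q, Q, h', hlen', hlt | ⟨-, hbr⟩⟩
    · exact Or.inl h'
    · exact Or.inr ⟨q, Q, h', hlen', hlt⟩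
    · exact absurd hbr hb
  · refine Or.inl ⟨l' :: Qs, ⟨nodup_flatten_cons.2
      ⟨nodup_of_mem_or_reverse_mem hP hl', ?_, ?_⟩, ?_⟩, rfl⟩
    · exact (nodup_flatten_cons.1 h.nodup).2.1
    · grind
    · grind [h.colourPath, ColourPath]

/-- A path between two elements `s`, `t` of the same colour, disjoint from `Ps`, is absorbed by a
stub packing attached near `s`: rerouting the stub packing along a path which starts at a coloured
element it misses decreases its deviation from these paths. -/
theorem IsStubPacking.hasPacking (hadj : ∀ ⦃x y⦄, adj x y → adj y x)
    (h : IsStubPacking adj col c u q₀ Qs) {t : α} (hP : ((s :: x₁ :: R) :: Ps).flatten.Nodup)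
    (hstrand : Strand adj col s t (s :: x₁ :: R)) (hs : col s = some c) (ht : col t = some c)
    (hPs : ∀ l ∈ Ps, ColourPath adj col l) (hsu : adj s u) (hx₁u : adj x₁ u)
    (hlen : Qs.length = Ps.length) : HasPacking adj col (Qs.length + 1) := by
  induction hk : totalDeviation ((s :: x₁ :: R) :: Ps) (q₀ :: Qs) using Nat.strong_induction_on
    generalizing q₀ Qs with
  | _ k ih =>
  subst hk
  by_cases hsF : s ∉ (q₀ :: Qs).flatten
  · exact h.hasPacking_of_not_mem hsu hs hsF
  rw [not_not] at hsF
  obtain ⟨r, hrP, hr_col, hrF⟩ := h.exists_coloured_not_mem hP hstrand hPs hlen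
  obtain ⟨l, hl, hrl⟩ := List.mem_flatten.1 hrP
  have hstep : HasPacking adj col (Qs.length + 1) ∨ ∃ q₀' Qs',
      IsStubPacking adj col c u q₀' Qs' ∧ Qs'.length = Qs.length ∧
        totalDeviation ((s :: x₁ :: R) :: Ps) (q₀' :: Qs') <
          totalDeviation ((s :: x₁ :: R) :: Ps) (q₀ :: Qs) := by
    rcases List.mem_cons.1 hl with rfl | hl_Ps
    · obtain rfl : r = t :=
        (hstrand.eq_or_eq_of_mem hrl hr_col).resolve_left fun hrs => hrF (hrs ▸ hsF)
      exact h.hasPacking_or_exists_lt_of_strand hadj hP hl hstrand hs ht hsu hx₁u hsF hrF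
    · exact h.hasPacking_or_exists_lt_of_colourPath hadj hP hl (hPs l hl_Ps) hrl hr_col hrF
  rcases hstep with h' | ⟨q₀', Qs', h', hlen', hlt⟩
  · exact h'
  · exact hlen' ▸ ih _ hlt h' (hlen'.trans hlen) rfl

theorem Strand.congr {col' : α → Option C} (h : Strand adj col a b l)
    (hcol : ∀ y ∈ l, col' y = col y) : Strand adj col' a b l where
  chain := h.chain
  eq_cons_concat := by
    obtain ⟨m, rfl, hm⟩ := h.eq_cons_concat
    exact ⟨m, rfl, fun y hy => (hcol y (by simp [hy])).trans (hm y hy)⟩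
  head_coloured := hcol a h.head_mem ▸ h.head_coloured
  last_coloured := hcol b h.last_mem ▸ h.last_coloured

theorem ColourPath.congr {col' : α → Option C} (h : ColourPath adj col l)
    (hcol : ∀ y ∈ l, col' y = col y) : ColourPath adj col' l := by
  obtain ⟨a, b, hab, hne⟩ := h
  exact ⟨a, b, hab.congr hcol, by rwa [hcol a hab.head_mem, hcol b hab.last_mem]⟩

/-- At most one path of a packing ends in the recoloured element `x`. -/
theorem HasPacking.of_update [DecidableEq α] (hadj : ∀ ⦃x y⦄, adj x y → adj y x)
    (h : HasPacking adj (Function.update col x (some c)) k) :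
    HasPacking adj col k ∨ ∃ m b L, ((x :: (m ++ [b])) :: L).flatten.Nodup ∧
      (x :: (m ++ [b])).IsChain adj ∧ (∀ y ∈ m, col y = none) ∧ col b ≠ none ∧ col b ≠ some c ∧
      (∀ l ∈ L, ColourPath adj col l) ∧ L.length + 1 = k := by
  obtain ⟨L, hL, rfl⟩ := h
  have hcongr : ∀ l : List α, x ∉ l → ∀ y ∈ l, col y = Function.update col x (some c) y :=
    fun l hx y hy => by rw [Function.update_of_ne (by rintro rfl; exact hx hy)]
  by_cases hx : x ∈ L.flatten
  · right
    obtain ⟨l, F, hxl, hperm⟩ := exists_perm_cons_of_mem_flatten hx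
    have hF := hL.perm hperm
    obtain ⟨hl, hF_nodup, hdisj⟩ := nodup_flatten_cons.1 hF.nodup
    obtain ⟨l', b, hl', hstrand, hbx⟩ := (hF.colourPath l (by simp)).exists_strand hadj hxl
      (by simp)
    have hmem : ∀ y, y ∈ l' ↔ y ∈ l := by grind
    have hl'_nodup : l'.Nodup := by rcases hl' with rfl | rfl <;> simpa
    have hb := hstrand.last_coloured
    obtain ⟨m, rfl, hm⟩ := hstrand.eq_cons_concat
    have hxmb : x ∉ m ++ [b] := (List.nodup_cons.1 hl'_nodup).1
    rw [← hcongr _ hxmb b (by simp)] at hb hbx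
    refine ⟨m, b, F, nodup_flatten_cons.2 ⟨hl'_nodup, hF_nodup, by grind⟩, hstrand.chain,
      fun y hy => ?_, hb, by simpa using hbx, fun l' hl' => ?_, by simp [hperm.length_eq]⟩
    · rw [hcongr _ hxmb y (by simp [hy]), hm y hy]
    · exact (hF.colourPath l' (by simp [hl'])).congr (hcongr l' fun hxl' =>
        hdisj x hxl (List.mem_flatten_of_mem hl' hxl'))
  · left
    exact ⟨L, ⟨hL.nodup, fun l hl => (hL.colourPath l hl).congr <|
      hcongr l fun hxl => hx (List.mem_flatten_of_mem hl hxl)⟩, rfl⟩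

theorem HasPacking.of_recoloured [DecidableEq α] (hadj : ∀ ⦃x y⦄, adj x y → adj y x) {c' : C}
    (h : HasPacking adj (Function.update col s (some c')) k) (hs : col s = some c) :
    HasPacking adj col k ∨ ∃ t x₁ R L, ((s :: x₁ :: R) :: L).flatten.Nodup ∧
      Strand adj col s t (s :: x₁ :: R) ∧ col t = some c ∧ (∀ l ∈ L, ColourPath adj col l) ∧
      L.length + 1 = k := by
  rcases h.of_update hadj with h | ⟨m, t, L, hnodup, hchain, hm, ht, -, hL, rfl⟩
  · exact Or.inl h
  have hstrand : Strand adj col s t (s :: (m ++ [t])) := ⟨hchain, ⟨m, rfl, hm⟩, by simp [hs], ht⟩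
  by_cases htc : col t = some c
  · obtain ⟨x₁, R, hx₁⟩ := List.exists_cons_of_ne_nil (show m ++ [t] ≠ [] by simp)
    rw [hx₁] at hnodup hstrand
    exact Or.inr ⟨t, x₁, R, L, hnodup, hstrand, htc, hL, rfl⟩
  · refine Or.inl ⟨_ :: L, ⟨hnodup, ?_⟩, rfl⟩
    rintro l (_ | ⟨_, hl⟩)
    · exact ⟨s, t, hstrand, hs ▸ Ne.symm htc⟩
    · exact hL l hl

theorem HasPacking.exists_isStubPacking [DecidableEq α] (hadj : ∀ ⦃x y⦄, adj x y → adj y x)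
    (h : HasPacking adj (Function.update col u (some c)) k) (hu : col u = none) :
    HasPacking adj col k ∨ ∃ q Qs, IsStubPacking adj col c u q Qs ∧ Qs.length + 1 = k := by
  rcases h.of_update hadj with h | ⟨m, b, L, hnodup, hchain, hm, hb, hbc, hL, rfl⟩
  · exact Or.inl h
  · exact Or.inr ⟨_, L, ⟨hnodup, ⟨hchain, rfl, u :: m, b, rfl, by simpa [hu], hb, hbc⟩, hL⟩, rfl⟩

theorem ColourPath.mono {adj' : α → α → Prop} (hadj : ∀ ⦃x y⦄, adj x y → adj' x y)
    (h : ColourPath adj col l) : ColourPath adj' col l :=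
  let ⟨a, b, hab, hne⟩ := h
  ⟨a, b, { hab with chain := hab.chain.imp hadj }, hne⟩

theorem HasPacking.mono_adj {adj' : α → α → Prop} (hadj : ∀ ⦃x y⦄, adj x y → adj' x y)
    (h : HasPacking adj col k) : HasPacking adj' col k :=
  let ⟨L, hL, hk⟩ := h
  ⟨L, ⟨hL.nodup, fun l hl => (hL.colourPath l hl).mono hadj⟩, hk⟩

theorem ColourPath.exists_adj (h : ColourPath adj col l) (hx : x ∈ l) :
    ∃ y, adj x y ∨ adj y x := by
  obtain ⟨a, b, hab, -⟩ := h
  obtain ⟨m, rfl, -⟩ := hab.eq_cons_concat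
  obtain ⟨A, B, h⟩ := List.append_of_mem hx
  have hchain := hab.chain
  rw [h] at hchain
  rcases B with _ | ⟨y, B⟩
  · rcases A.eq_nil_or_concat with rfl | ⟨A, y, rfl⟩
    · simpa using congrArg List.length h
    · have hyx : (A ++ [y, x]).IsChain adj := by simpa using hchain
      exact ⟨y, Or.inr (List.isChain_split.1 hyx).2.rel⟩
  · exact ⟨y, Or.inl (List.isChain_split.1 hchain).2.rel⟩

end ColourPaths

section ClawFree

variable {α : Type*} {adj : α → α → Prop} {l l₁ l₂ A B C D : List α} {L : List (List α)} {e : α}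

/-- The list of the two ends of a path. -/
def ends (l : List α) : List α := l.head?.toList ++ l.getLast?.toList

theorem ends_append (hA : A ≠ []) (hB : B ≠ []) :
    ends (A ++ B) = A.head?.toList ++ B.getLast?.toList := by
  rw [ends, List.head?_append_of_ne_nil _ hA, List.getLast?_append_of_ne_nil _ hB]

theorem ends_reverse (l : List α) : (ends l.reverse).Perm (ends l) := by
  rw [ends, List.head?_reverse, List.getLast?_reverse]
  exact List.perm_append_comm

theorem exists_shorter_of_not_nodup (hl : l.IsChain adj) (hnodup : ¬ l.Nodup) :
    ∃ l', l'.IsChain adj ∧ ends l' = ends l ∧ l'.length < l.length := by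
  obtain ⟨x, hx⟩ := List.exists_duplicate_iff_not_nodup.2 hnodup
  obtain ⟨S₁, S₂, rfl, h₁, h₂⟩ := List.cons_sublist_iff.1 (List.duplicate_iff_sublist.1 hx)
  obtain ⟨A, B, rfl⟩ := List.append_of_mem h₁
  obtain ⟨B', C, rfl⟩ := List.append_of_mem (List.singleton_sublist.1 h₂)
  refine ⟨A ++ x :: C, List.isChain_split.2 ⟨?_, ?_⟩, ?_, by simp; omega⟩
  · exact hl.infix ⟨[], B ++ (B' ++ x :: C), by simp⟩
  · exact hl.infix ⟨A ++ x :: (B ++ B'), [], by simp⟩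
  · cases A <;> simp [ends, List.getLast?_append, List.getLast?_cons]

/-- Of the neighbours of `e` on `A`, `B` and `C` two are adjacent, which gives a shortcut. -/
theorem exists_shorter_pair_of_ne_nil (hadj : ∀ ⦃x y⦄, adj x y → adj y x)
    (hclaw : ∀ ⦃e x y z⦄, adj e x → adj e y → adj e z → adj x y ∨ adj x z ∨ adj y z)
    (h₁ : (A ++ e :: B).IsChain adj) (h₂ : (C ++ e :: D).IsChain adj)
    (hA : A ≠ []) (hB : B ≠ []) (hC : C ≠ []) :
    ∃ l₁ l₂, l₁.IsChain adj ∧ l₂.IsChain adj ∧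
      (ends l₁ ++ ends l₂).Perm (ends (A ++ e :: B) ++ ends (C ++ e :: D)) ∧
      l₁.length + l₂.length < (A ++ e :: B).length + (C ++ e :: D).length := by
  have hrev : ∀ {l : List α}, l.IsChain adj → l.reverse.IsChain adj := fun hl =>
    List.isChain_reverse.2 (hl.imp fun _ _ hxy => hadj hxy)
  have hperm : ∀ {S S' : List α}, (∀ [DecidableEq α], ∀ x, S.count x = S'.count x) → S.Perm S' :=
    fun h => by classical exact List.perm_iff_count.2 h
  obtain ⟨a, ha⟩ := Option.ne_none_iff_exists'.1 (mt List.getLast?_eq_none_iff.1 hA)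
  obtain ⟨b, hb⟩ := Option.ne_none_iff_exists'.1 (mt List.head?_eq_none_iff.1 hB)
  obtain ⟨c, hc⟩ := Option.ne_none_iff_exists'.1 (mt List.getLast?_eq_none_iff.1 hC)
  have hlast : (e :: B).getLast? = B.getLast? := List.getLast?_append_of_ne_nil [e] hB
  obtain ⟨hchA, hcheB, hae⟩ := List.isChain_append.1 h₁
  obtain ⟨heb, hchB⟩ := List.isChain_cons.1 hcheB
  obtain ⟨hchC, hcheD, hce⟩ := List.isChain_append.1 h₂
  simp only [ha, hb, hc, Option.mem_some_iff, forall_eq', List.head?_cons] at hae heb hce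
  rcases hclaw (hadj hae) heb (hadj hce) with hab | hac | hbc
  · refine ⟨A ++ B, C ++ e :: D, hchA.append hchB (by simpa [ha, hb]), h₂, ?_, ?_⟩
    · simp only [ends_append, hA, hB, hlast, ne_eq, not_false_eq_true, reduceCtorEq,
        List.Perm.refl]
    · simp
  · refine ⟨A ++ C.reverse, B.reverse ++ e :: D, hchA.append (hrev hchC) (by simpa [ha, hc]),
      (hrev hchB).append hcheD (by simpa [hb] using hadj heb), hperm fun x => ?_, ?_⟩
    · simp only [ends_append, hA, hB, hC, hlast, ne_eq, not_false_eq_true, reduceCtorEq,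
        List.reverse_eq_nil_iff, List.getLast?_reverse, List.head?_reverse, List.count_append]
      omega
    · simp
      omega
  · refine ⟨C ++ B, A ++ e :: D, hchC.append hchB (by simpa [hb, hc] using hadj hbc),
      hchA.append hcheD (by simpa [ha]), hperm fun x => ?_, ?_⟩
    · simp only [ends_append, hA, hB, hC, hlast, ne_eq, not_false_eq_true, reduceCtorEq,
        List.count_append]
      omega
    · simp
      omega

theorem exists_shorter_pair (hadj : ∀ ⦃x y⦄, adj x y → adj y x)
    (hclaw : ∀ ⦃e x y z⦄, adj e x → adj e y → adj e z → adj x y ∨ adj x z ∨ adj y z)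
    (h₁ : l₁.IsChain adj) (h₂ : l₂.IsChain adj) (he₁ : e ∈ l₁) (he₂ : e ∈ l₂)
    (hends : (ends l₁ ++ ends l₂).Nodup) :
    ∃ l₁' l₂', l₁'.IsChain adj ∧ l₂'.IsChain adj ∧
      (ends l₁' ++ ends l₂').Perm (ends l₁ ++ ends l₂) ∧
      l₁'.length + l₂'.length < l₁.length + l₂.length := by
  -- The element `e` is interior to one of the two paths.
  wlog hint : e ∉ ends l₁ generalizing l₁ l₂
  · have hint₂ : e ∉ ends l₂ := fun he =>
      (List.nodup_append'.1 hends).2.2 (by simpa using hint) he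
    obtain ⟨l₂', l₁', h₂', h₁', hends', hlt⟩ := this h₂ h₁ he₂ he₁
      (List.perm_append_comm.nodup_iff.1 hends) hint₂
    exact ⟨l₂', l₁', h₂', h₁', hends'.trans List.perm_append_comm, by omega⟩
  obtain ⟨A, B, rfl⟩ := List.append_of_mem he₁
  obtain ⟨C, D, rfl⟩ := List.append_of_mem he₂
  have hA : A ≠ [] := by rintro rfl; simp [ends] at hint
  have hB : B ≠ [] := by rintro rfl; simp [ends] at hint
  by_cases hC : C = []
  · have hD : D ≠ [] := by
      rintro rfl
      simp [hC, ends, List.nodup_append] at hends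
    obtain ⟨l₁', l₂', h₁', h₂', hends', hlt⟩ := exists_shorter_pair_of_ne_nil (C := D.reverse)
      (D := C.reverse) hadj hclaw h₁ (by
        simpa using List.isChain_reverse.2 (h₂.imp fun _ _ hxy => hadj hxy)) hA hB (by simpa)
    refine ⟨l₁', l₂', h₁', h₂', hends'.trans (List.Perm.append_left _ ?_), by simp at hlt ⊢; omega⟩
    simpa using ends_reverse (C ++ e :: D)
  · exact exists_shorter_pair_of_ne_nil hadj hclaw h₁ h₂ hA hB hC

/-- In a claw-free graph paths can be uncrossed at a common vertex, so a system of paths of minimum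
total length with prescribed distinct ends is disjoint. -/
theorem exists_disjoint_chains (hadj : ∀ ⦃x y⦄, adj x y → adj y x)
    (hclaw : ∀ ⦃e x y z⦄, adj e x → adj e y → adj e z → adj x y ∨ adj x z ∨ adj y z)
    (hL : ∀ l ∈ L, l.IsChain adj) (hends : (L.flatMap ends).Nodup) :
    ∃ L' : List (List α), L'.length = L.length ∧ (∀ l ∈ L', l.IsChain adj) ∧
      (L'.flatMap ends).Perm (L.flatMap ends) ∧ L'.flatten.Nodup := by
  induction hn : L.flatten.length using Nat.strong_induction_on generalizing L with
  | _ n ih =>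
  subst hn
  by_cases hnodup : ∀ l ∈ L, l.Nodup
  · by_cases hdisj : L.Pairwise List.Disjoint
    · exact ⟨L, rfl, hL, List.Perm.refl _, List.nodup_flatten.2 ⟨hnodup, hdisj⟩⟩
    rw [List.pairwise_iff_forall_sublist] at hdisj
    push Not at hdisj
    obtain ⟨l₁, l₂, hsub, hmeet⟩ := hdisj
    obtain ⟨F, hperm⟩ := hsub.exists_perm_append
    obtain ⟨e, he₁, he₂⟩ : ∃ e, e ∈ l₁ ∧ e ∈ l₂ := by simpa [List.disjoint_left] using hmeet
    have hperm_ends := hperm.flatMap_right ends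
    simp only [List.flatMap_append, List.flatMap_cons, List.flatMap_nil, List.append_nil,
      List.append_assoc] at hperm_ends
    have hends₂ : (ends l₁ ++ ends l₂).Nodup :=
      (hperm_ends.nodup_iff.1 hends).sublist (by simp [← List.append_assoc])
    obtain ⟨l₁', l₂', h₁', h₂', hends', hlt⟩ := exists_shorter_pair hadj hclaw
      (hL l₁ (hsub.subset (by simp))) (hL l₂ (hsub.subset (by simp))) he₁ he₂ hends₂
    have hperm' : ((l₁' :: l₂' :: F).flatMap ends).Perm (L.flatMap ends) := by
      refine List.Perm.trans ?_ hperm_ends.symm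
      simpa [← List.append_assoc] using hends'.append_right _
    obtain ⟨L', hlen, hL', hL'_ends, hL'_nodup⟩ := ih _ (by
      rw [hperm.flatten.length_eq]; simp; omega) (L := l₁' :: l₂' :: F)
      (by grind) (hperm'.nodup_iff.2 hends) rfl
    exact ⟨L', by simp [hlen, hperm.length_eq], hL', hL'_ends.trans hperm', hL'_nodup⟩
  · push Not at hnodup
    obtain ⟨l, hl, hnodup⟩ := hnodup
    obtain ⟨l', hl', hends', hlt⟩ := exists_shorter_of_not_nodup (hL l hl) hnodup
    obtain ⟨S, S', rfl⟩ := List.append_of_mem hl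
    obtain ⟨L', hlen, hL', hL'_ends, hL'_nodup⟩ := ih _ (by simp; omega) (L := S ++ l' :: S')
      (by grind) (by simpa [hends'] using hends) rfl
    exact ⟨L', by simpa using hlen, hL', by simpa [hends'] using hL'_ends, hL'_nodup⟩

end ClawFree

section Labels

variable {α V C : Type*} {Λ Λ' : α → Set (C ⊕ V)} {u : α} {Y Y' : V}

/-- The elements carrying two different colours, for a family `Λ` of label sets whose labels are
either colours or names of anonymous classes. -/
def bichromatic (Λ : α → Set (C ⊕ V)) : Set α := {e | ¬ (Sum.inl ⁻¹' Λ e).Subsingleton}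

/-- The elements which carry the anonymous label `Y` and another label, but not two colours. -/
def boundary (Λ : α → Set (C ⊕ V)) (Y : V) : Set α :=
  {e | e ∉ bichromatic Λ ∧ Sum.inr Y ∈ Λ e ∧ Λ e ≠ {Sum.inr Y}}

/-- The upper bound which `Λ` imposes on the number of disjoint colour paths: such a path contains
a bichromatic element or two boundary elements of an anonymous class. -/
noncomputable def value [Fintype V] (Λ : α → Set (C ⊕ V)) : ℕ :=
  (bichromatic Λ).ncard + ∑ Y, (boundary Λ Y).ncard / 2

theorem mem_bichromatic {e : α} :
    e ∈ bichromatic Λ ↔ ∃ a b, Sum.inl a ∈ Λ e ∧ Sum.inl b ∈ Λ e ∧ a ≠ b := by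
  simp only [bichromatic, Set.mem_ofPred_eq, Set.Subsingleton, Set.mem_preimage]
  grind

theorem value_mono [Fintype V] [Finite α] (m : C → C)
    (hΛ' : ∀ e ∈ bichromatic Λ', (Sum.inr ⁻¹' Λ' e).Subsingleton)
    (h : ∀ e, Λ e ⊆ Sum.map m id '' Λ' e) : value Λ ≤ value Λ' := by
  have hinr : ∀ {e Z}, Sum.inr Z ∈ Λ e → Sum.inr Z ∈ Λ' e := fun {e Z} hZ => by
    obtain ⟨_ | Z', hZ', hZZ'⟩ := h e hZ <;> simp_all
  have hinl : ∀ {e a}, Sum.inl a ∈ Λ e → ∃ a', Sum.inl a' ∈ Λ' e ∧ m a' = a := fun {e a} ha => by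
    obtain ⟨a' | _, ha', haa'⟩ := h e ha
    · exact ⟨a', ha', Sum.inl_injective haa'⟩
    · simp at haa'
  have hbi : bichromatic Λ ⊆ bichromatic Λ' := by
    intro e he
    obtain ⟨a, b, ha, hb, hab⟩ := mem_bichromatic.1 he
    obtain ⟨a', ha', rfl⟩ := hinl ha
    obtain ⟨b', hb', rfl⟩ := hinl hb
    exact mem_bichromatic.2 ⟨a', b', ha', hb', fun h => hab (h ▸ rfl)⟩
  have hbd : ∀ Y, boundary Λ Y ⊆ boundary Λ' Y ∪ boundary Λ Y ∩ bichromatic Λ' := by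
    intro Y e he
    by_cases he' : e ∈ bichromatic Λ'
    · exact Or.inr ⟨he, he'⟩
    refine Or.inl ⟨he', hinr he.2.1, fun heq => he.2.2 ?_⟩
    refine subset_antisymm ((h e).trans ?_) (by simpa using he.2.1)
    simp [heq]
  have hnew : ∑ Y, (boundary Λ Y ∩ bichromatic Λ').ncard ≤
      (bichromatic Λ' \ bichromatic Λ).ncard := by
    rw [← finsum_eq_sum_of_fintype, ← Set.ncard_iUnion_of_finite fun _ => Set.toFinite _]
    · refine Set.ncard_le_ncard (Set.iUnion_subset fun Y e he => ⟨he.2, he.1.1⟩)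
    · intro Y Y' hne
      refine Set.disjoint_left.2 fun e he he' => hne ?_
      exact hΛ' e he.2 (hinr he.1.2.1) (hinr he'.1.2.1)
  calc value Λ ≤ (bichromatic Λ).ncard +
        ∑ Y, ((boundary Λ' Y).ncard / 2 + (boundary Λ Y ∩ bichromatic Λ').ncard) := by
        refine Nat.add_le_add_left (Finset.sum_le_sum fun Y _ => ?_) _
        have := (Set.ncard_le_ncard (hbd Y)).trans (Set.ncard_union_le _ _)
        omega
    _ ≤ value Λ' := by
        rw [Finset.sum_add_distrib, value, ← Set.ncard_sdiff_add_ncard_of_subset hbi]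
        omega

theorem value_le_add_one_of_bichromatic [Fintype V] [Finite α] (hu : u ∈ bichromatic Λ)
    (h : ∀ e ≠ u, Λ e = Λ' e) : value Λ ≤ value Λ' + 1 := by
  have hbi : (bichromatic Λ).ncard ≤ (bichromatic Λ').ncard + 1 := by
    refine (Set.ncard_le_ncard fun e he => ?_).trans (Set.ncard_insert_le u _)
    by_cases heu : e = u
    · exact Or.inl heu
    · exact Or.inr (by simpa [bichromatic, h e heu] using he)
  have hbd : ∀ Y, boundary Λ Y ⊆ boundary Λ' Y := fun Y e he => by
    have heu : e ≠ u := fun heu => he.1 (heu ▸ hu)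
    simpa [boundary, bichromatic, h e heu] using he
  calc value Λ ≤ (bichromatic Λ').ncard + 1 + ∑ Y, (boundary Λ' Y).ncard / 2 := by
        refine Nat.add_le_add hbi (Finset.sum_le_sum fun Y _ => ?_)
        exact Nat.div_le_div_right (Set.ncard_le_ncard (hbd Y))
    _ = value Λ' + 1 := by
        rw [value]
        omega

theorem value_le_add_one_of_pair [Fintype V] [DecidableEq V] [Finite α]
    (hbi : bichromatic Λ ⊆ bichromatic Λ')
    (hbd : ∀ Z ∉ ({Y, Y'} : Finset V), boundary Λ Z ⊆ boundary Λ' Z)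
    (hpair : ∑ Z ∈ {Y, Y'}, (boundary Λ Z).ncard / 2 ≤
      ∑ Z ∈ {Y, Y'}, (boundary Λ' Z).ncard / 2 + 1) : value Λ ≤ value Λ' + 1 := by
  rw [value, value, ← Finset.sum_sdiff (Finset.subset_univ {Y, Y'}),
    ← Finset.sum_sdiff (Finset.subset_univ {Y, Y'})]
  have hrest : ∑ Z ∈ Finset.univ \ {Y, Y'}, (boundary Λ Z).ncard / 2 ≤
      ∑ Z ∈ Finset.univ \ {Y, Y'}, (boundary Λ' Z).ncard / 2 :=
    Finset.sum_le_sum fun Z hZ => Nat.div_le_div_right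
      (Set.ncard_le_ncard (hbd Z (Finset.mem_sdiff.1 hZ).2))
  have := Set.ncard_le_ncard hbi
  omega

theorem mem_bichromatic_of_image {e : α} {μ : V → V} (he : Λ e = Sum.map id μ '' Λ' e) :
    e ∈ bichromatic Λ ↔ e ∈ bichromatic Λ' := by
  simp [mem_bichromatic, he]

theorem exists_mem_boundary_of_image {e : α} {μ : V → V} (he : Λ e = Sum.map id μ '' Λ' e)
    (heY : e ∈ boundary Λ Y) : ∃ Z, μ Z = Y ∧ e ∈ boundary Λ' Z := by
  obtain ⟨hbi, hY, hne⟩ := heY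
  rw [he] at hY hne
  obtain ⟨_ | Z, hZ, hZY⟩ := hY
  · simp at hZY
  refine ⟨Z, Sum.inr_injective hZY, fun hb => hbi ((mem_bichromatic_of_image he).2 hb), hZ,
    fun heq => hne ?_⟩
  rw [heq, Set.image_singleton, hZY]

open Classical in
theorem value_le_add_one_of_merge [Fintype V] [Finite α] (hu : u ∉ bichromatic Λ)
    (hu_bd : ∀ Z, Sum.inr Z ∈ Λ u → Z = Y)
    (h : ∀ e ≠ u, Λ e = Sum.map id (Function.update id Y' Y) '' Λ' e) :
    value Λ ≤ value Λ' + 1 := by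
  have hbi : bichromatic Λ ⊆ bichromatic Λ' := fun e he =>
    (mem_bichromatic_of_image (h e fun heu => hu (heu ▸ he))).1 he
  have hne : ∀ {e Z}, e ∈ boundary Λ Z → Z ≠ Y → e ≠ u := by
    rintro e Z he hZ rfl
    exact hZ (hu_bd Z he.2.1)
  have hbd : ∀ Z ∉ ({Y, Y'} : Finset V), boundary Λ Z ⊆ boundary Λ' Z := by
    intro Z hZ e he
    obtain ⟨Z', rfl, hZ'⟩ := exists_mem_boundary_of_image (h e (hne he (by grind))) he
    by_cases hZY' : Z' = Y'
    · simp [hZY'] at hZ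
    · rwa [Function.update_of_ne hZY']
  have hbdY : boundary Λ Y ⊆ insert u (boundary Λ' Y ∪ boundary Λ' Y') := by
    intro e he
    by_cases heu : e = u
    · exact Or.inl heu
    obtain ⟨Z, hZY, hZ⟩ := exists_mem_boundary_of_image (h e heu) he
    by_cases hZY' : Z = Y'
    · exact Or.inr (Or.inr (hZY' ▸ hZ))
    · rw [Function.update_of_ne hZY', id] at hZY
      exact Or.inr (Or.inl (hZY ▸ hZ))
  have hbdY' : Y ≠ Y' → boundary Λ Y' = ∅ := by
    refine fun hYY' => Set.eq_empty_of_forall_notMem fun e he => ?_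
    obtain ⟨Z, hZ, -⟩ := exists_mem_boundary_of_image (h e (hne he hYY'.symm)) he
    by_cases hZY' : Z = Y' <;> simp_all
  have hpair : ∑ Z ∈ {Y, Y'}, (boundary Λ Z).ncard / 2 ≤
      ∑ Z ∈ {Y, Y'}, (boundary Λ' Z).ncard / 2 + 1 := by
    have := (Set.ncard_le_ncard hbdY).trans (Set.ncard_insert_le _ _)
    by_cases hYY' : Y = Y'
    · subst hYY'
      simp only [Set.union_self, Finset.mem_singleton, Finset.insert_eq_of_mem,
        Finset.sum_singleton] at this ⊢
      omega
    · have := Set.ncard_union_le (boundary Λ' Y) (boundary Λ' Y')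
      simp only [Finset.sum_pair hYY', hbdY' hYY', Set.ncard_empty]
      omega
  exact value_le_add_one_of_pair hbi hbd hpair

end Labels

section Incidence

variable {α V C : Type*} {I I' : α → Set V} {col : α → Option C} {φ : V → C ⊕ V} {c d : C}
  {e s u : α} {v : V} {k : ℕ}

/-- Adjacency of elements, such as the edges of a graph, where `I e` is the set of vertices incident
with `e`: they have a common vertex. -/
def Touch (I : α → Set V) (e f : α) : Prop := (I e ∩ I f).Nonempty

/-- Every element is incident with at most two vertices. -/
def RankLETwo (I : α → Set V) : Prop :=
  ∀ ⦃e x y z⦄, x ∈ I e → y ∈ I e → z ∈ I e → x = y ∨ x = z ∨ y = z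

/-- The labels of `e` when the vertices are labelled by `φ`: those of its vertices and its own
colour. -/
def labels (I : α → Set V) (col : α → Option C) (φ : V → C ⊕ V) (e : α) : Set (C ⊕ V) :=
  φ '' I e ∪ Sum.inl '' {c | col e = some c}

theorem Touch.symm ⦃e f : α⦄ (h : Touch I e f) : Touch I f e := by
  rwa [Touch, Set.inter_comm]

theorem Touch.mono (hI : ∀ e, I e ⊆ I' e) ⦃e f : α⦄ (h : Touch I e f) : Touch I' e f :=
  Set.Nonempty.mono (Set.inter_subset_inter (hI e) (hI f)) h

theorem RankLETwo.mono (h : RankLETwo I') (hI : ∀ e, I e ⊆ I' e) : RankLETwo I :=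
  fun _ _ _ _ hx hy hz => h (hI _ hx) (hI _ hy) (hI _ hz)

theorem RankLETwo.touch_clawFree (h : RankLETwo I) ⦃e x y z : α⦄ (hx : Touch I e x)
    (hy : Touch I e y) (hz : Touch I e z) : Touch I x y ∨ Touch I x z ∨ Touch I y z := by
  obtain ⟨a, hae, hax⟩ := hx
  obtain ⟨b, hbe, hby⟩ := hy
  obtain ⟨c, hce, hcz⟩ := hz
  rcases h hae hbe hce with rfl | rfl | rfl
  · exact Or.inl ⟨a, hax, hby⟩
  · exact Or.inr (Or.inl ⟨a, hax, hcz⟩)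
  · exact Or.inr (Or.inr ⟨b, hby, hcz⟩)

theorem inl_mem_labels : Sum.inl c ∈ labels I col φ e ↔
    (∃ v ∈ I e, φ v = Sum.inl c) ∨ col e = some c := by
  simp [labels]

theorem inr_mem_labels {Y : V} : Sum.inr Y ∈ labels I col φ e ↔ ∃ v ∈ I e, φ v = Sum.inr Y := by
  simp [labels]

theorem RankLETwo.inr_labels_subsingleton (h : RankLETwo I)
    (he : e ∈ bichromatic (labels I col φ)) :
    (Sum.inr ⁻¹' labels I col φ e : Set V).Subsingleton := by
  obtain ⟨w, hw, a, hwa⟩ : ∃ w ∈ I e, ∃ a, φ w = Sum.inl a := by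
    obtain ⟨a, b, ha, hb, hab⟩ := mem_bichromatic.1 he
    rw [inl_mem_labels] at ha hb
    grind
  intro Y hY Y' hY'
  obtain ⟨x, hx, hxY⟩ := inr_mem_labels.1 hY
  obtain ⟨y, hy, hyY'⟩ := inr_mem_labels.1 hY'
  rcases h hw hx hy with rfl | rfl | rfl <;> simp_all

theorem RankLETwo.exists_inr_labels_eq_or_eq [Nonempty V] (h : RankLETwo I) (φ : V → C ⊕ V)
    (e : α) : ∃ Y Y', ∀ Z, Sum.inr Z ∈ labels I col φ e → Z = Y ∨ Z = Y' := by
  by_cases hsub : (Sum.inr ⁻¹' labels I col φ e : Set V).Subsingleton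
  · rcases hsub.eq_empty_or_singleton with h | ⟨Y, h⟩
    · exact ⟨Classical.arbitrary V, Classical.arbitrary V, fun Z hZ => (h.subset hZ).elim⟩
    · exact ⟨Y, Y, fun Z hZ => Or.inl (h.subset hZ)⟩
  · obtain ⟨Y, hY, Y', hY', hne⟩ := Set.not_subsingleton_iff.1 hsub
    refine ⟨Y, Y', fun Z hZ => ?_⟩
    obtain ⟨x, hx, hxY⟩ := inr_mem_labels.1 hY
    obtain ⟨y, hy, hyY'⟩ := inr_mem_labels.1 hY'
    obtain ⟨z, hz, hzZ⟩ := inr_mem_labels.1 hZ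
    rcases h hx hy hz with rfl | rfl | rfl <;> simp_all

section Value

variable [Finite α] [Fintype V]

theorem le_value_of_labels_subset (hI : RankLETwo I') {col' : α → Option C} (m : C → C)
    (hk : ∀ φ : V → C ⊕ V, k ≤ value (labels I col φ))
    (h : ∀ φ : V → C ⊕ V, ∃ ψ : V → C ⊕ V, ∀ e,
      labels I col ψ e ⊆ Sum.map m id '' labels I' col' φ e) (φ : V → C ⊕ V) :
    k ≤ value (labels I' col' φ) := by
  obtain ⟨ψ, hψ⟩ := h φ
  exact (hk ψ).trans (value_mono m (fun _ => hI.inr_labels_subsingleton) hψ)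

theorem le_value_of_recoloured [DecidableEq α] (hI : RankLETwo I) {c' : C} (hs : col s = some c)
    (hc' : ∀ e, col e ≠ some c') (hk : ∀ φ : V → C ⊕ V, k ≤ value (labels I col φ))
    (φ : V → C ⊕ V) : k ≤ value (labels I (Function.update col s (some c')) φ) := by
  classical
  let m := Function.update id c' c
  refine le_value_of_labels_subset hI m hk (fun φ => ⟨Sum.map m id ∘ φ, fun e => ?_⟩) φ
  rintro _ (⟨v, hv, rfl⟩ | ⟨a, ha, rfl⟩)
  · exact ⟨φ v, Or.inl ⟨v, hv, rfl⟩, rfl⟩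
  · rw [Set.mem_ofPred_eq] at ha
    by_cases hes : e = s
    · subst hes
      exact ⟨Sum.inl c', inl_mem_labels.2 (Or.inr (by simp)), by simp_all [m]⟩
    · have hac' : a ≠ c' := fun hac' => hc' e (hac' ▸ ha)
      exact ⟨Sum.inl a, inl_mem_labels.2 (Or.inr (by rwa [Function.update_of_ne hes])),
        by simp [m, hac']⟩

theorem le_value_of_coloured [DecidableEq α] (hI : RankLETwo I) (hu : col u = none)
    (hk : ∀ φ : V → C ⊕ V, k ≤ value (labels I col φ)) (φ : V → C ⊕ V) :
    k ≤ value (labels I (Function.update col u (some c)) φ) := by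
  refine le_value_of_labels_subset hI id hk (fun φ => ⟨φ, fun e => ?_⟩) φ
  rw [Sum.map_id_id, Set.image_id]
  refine Set.union_subset_union_right _ (Set.image_mono fun a ha => ?_)
  rw [Set.mem_ofPred_eq] at ha ⊢
  rwa [Function.update_of_ne fun heu => by simp_all]

theorem le_value_of_erase (hI : RankLETwo I) (hv : ∀ e, v ∈ I e → col e = some c)
    (hk : ∀ φ : V → C ⊕ V, k ≤ value (labels I col φ)) (φ : V → C ⊕ V) :
    k ≤ value (labels (fun e => I e \ {v}) col φ) := by
  classical
  refine le_value_of_labels_subset (hI.mono fun e => Set.sdiff_subset) id hk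
    (fun φ => ⟨Function.update φ v (Sum.inl c), fun e => ?_⟩) φ
  rw [Sum.map_id_id, Set.image_id]
  rintro _ (⟨w, hw, rfl⟩ | ha)
  · by_cases hwv : w = v
    · subst hwv
      simpa using inl_mem_labels.2 (Or.inr (hv e hw))
    · rw [Function.update_of_ne hwv]
      exact Or.inl ⟨w, ⟨hw, hwv⟩, rfl⟩
  · exact Or.inr ha

theorem exists_value_le_value_delete_add_one [DecidableEq α] [Nonempty V] (hI : RankLETwo I)
    (φ : V → C ⊕ V) : ∃ ψ : V → C ⊕ V, value (labels I col ψ) ≤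
      value (labels (Function.update I u ∅) col φ) + 1 := by
  classical
  have hne : ∀ e ≠ u, labels I col φ e = labels (Function.update I u ∅) col φ e := fun e he => by
    simp [labels, he]
  by_cases hbi : u ∈ bichromatic (labels I col φ)
  · exact ⟨φ, value_le_add_one_of_bichromatic hbi hne⟩
  -- All anonymous labels of `u` are merged into one.
  obtain ⟨Y, Y', hYY'⟩ := hI.exists_inr_labels_eq_or_eq φ u (col := col)
  have himage : ∀ e, labels I col (Sum.map id (Function.update id Y' Y) ∘ φ) e =
      Sum.map id (Function.update id Y' Y) '' labels I col φ e := fun e => by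
    simp only [labels, Set.image_union, Set.image_image, Function.comp_apply, Sum.map_inl, id]
  refine ⟨Sum.map id (Function.update id Y' Y) ∘ φ, value_le_add_one_of_merge (u := u) (Y := Y)
    (Y' := Y') ?_ ?_ fun e he => ?_⟩
  · rwa [mem_bichromatic_of_image (himage u)]
  · intro Z hZ
    rw [himage] at hZ
    obtain ⟨_ | Z', hZ', hZZ'⟩ := hZ
    · simp at hZZ'
    · have hμ : Function.update id Y' Y Z' = Z := Sum.inr_injective hZZ'
      rw [← hμ]
      by_cases h : Z' = Y'
      · rw [h, Function.update_self]
      · rw [Function.update_of_ne h, id, (hYY' Z' hZ').resolve_right h]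
  · rw [himage, hne e he]

theorem le_value_of_delete [DecidableEq α] [Nonempty V] (hI : RankLETwo I)
    (hk : ∀ φ : V → C ⊕ V, k ≤ value (labels I col φ)) (φ : V → C ⊕ V) :
    k - 1 ≤ value (labels (Function.update I u ∅) col φ) := by
  obtain ⟨ψ, hψ⟩ := exists_value_le_value_delete_add_one (u := u) (col := col) hI φ
  have := hk ψ
  omega

end Value

theorem exists_chains_of_reachable {adj : α → α → Prop} : ∀ {l : List α},
    (∀ x ∈ l, ∀ y ∈ l, Relation.ReflTransGen adj x y) →
    ∃ L : List (List α), L.length = l.length / 2 ∧ (∀ m ∈ L, m ≠ [] ∧ m.IsChain adj) ∧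
      (L.flatMap ends).Sublist l
  | [], _ => ⟨[], by simp⟩
  | [_], _ => ⟨[], by simp⟩
  | x :: y :: l, h => by
    obtain ⟨L, hlen, hchain, hends⟩ := exists_chains_of_reachable (l := l)
      fun a ha b hb => h a (by simp [ha]) b (by simp [hb])
    obtain ⟨m, hm, hlast⟩ :=
      List.exists_isChain_cons_of_relationReflTransGen (h x (by simp) y (by simp))
    refine ⟨(x :: m) :: L, by grind,
      List.forall_mem_cons.2 ⟨⟨by simp, hm⟩, hchain⟩, ?_⟩
    have hxm : ends (x :: m) = [x, y] := by
      rw [ends, List.getLast?_eq_some_getLast (List.cons_ne_nil x m), hlast]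
      rfl
    simpa [hxm] using hends

theorem HasPacking.of_infix {adj : α → α → Prop} {L : List (List α)} (hL : L.flatten.Nodup)
    (h : ∀ l ∈ L, ∃ D, D <:+: l ∧ ColourPath adj col D) : HasPacking adj col L.length := by
  suffices hD : ∃ L' : List (List α), L'.length = L.length ∧ (∀ l ∈ L', ColourPath adj col l) ∧
      L'.flatten.Sublist L.flatten by
    obtain ⟨L', hlen, hcol, hsub⟩ := hD
    exact ⟨L', ⟨hL.sublist hsub, hcol⟩, hlen⟩
  clear hL
  induction L with
  | nil => exact ⟨[], rfl, by simp, by simp⟩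
  | cons l L ih =>
    obtain ⟨⟨D, hD, hDcol⟩, hL⟩ := List.forall_mem_cons.1 h
    obtain ⟨L', hlen, hcol, hsub⟩ := ih hL
    exact ⟨D :: L', by simp [hlen], List.forall_mem_cons.2 ⟨hDcol, hcol⟩, hD.sublist.append hsub⟩

theorem exists_component_representative (I : α → Set V) :
    ∃ ρ : V → V, (∀ ⦃e v w⦄, v ∈ I e → w ∈ I e → ρ v = ρ w) ∧ ∀ ⦃e f v w⦄, v ∈ I e → w ∈ I f →
      ρ v = ρ w → Relation.ReflTransGen (Touch I) e f := by
  let r : V → V → Prop := fun v w => ∃ e, v ∈ I e ∧ w ∈ I e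
  have : Std.Symm r := ⟨fun v w ⟨e, hv, hw⟩ => ⟨e, hw, hv⟩⟩
  let component : Setoid V := ⟨Relation.ReflTransGen r, fun _ => .refl,
    symm_of (Relation.ReflTransGen r), .trans⟩
  refine ⟨fun v => (Quotient.mk component v).out, fun e v w hv hw => ?_,
    fun e f v w hv hw h => ?_⟩
  · exact congrArg Quotient.out (Quotient.sound (s := component) (.single ⟨e, hv, hw⟩))
  · have hvw : Relation.ReflTransGen r v w := Quotient.exact (Quotient.out_inj.1 h)
    clear h
    induction hvw using Relation.ReflTransGen.head_induction_on generalizing e with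
    | refl => exact .single ⟨w, hv, hw⟩
    | head hvx _ ih =>
      obtain ⟨g, hvg, hxg⟩ := hvx
      exact .head ⟨_, hv, hvg⟩ (ih g hxg)

theorem bichromatic_labels_inr {ρ : V → V} : bichromatic (labels I col (Sum.inr ∘ ρ)) = ∅ := by
  refine Set.eq_empty_of_forall_notMem fun e he => ?_
  obtain ⟨a, b, ha, hb, hab⟩ := mem_bichromatic.1 he
  simp only [inl_mem_labels, Function.comp_apply, reduceCtorEq, and_false, exists_false,
    false_or] at ha hb
  exact hab (Option.some_injective _ (ha.symm.trans hb))

theorem coloured_of_mem_boundary_labels_inr {ρ : V → V}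
    (hρ : ∀ ⦃e v w⦄, v ∈ I e → w ∈ I e → ρ v = ρ w) {Y : V}
    (he : e ∈ boundary (labels I col (Sum.inr ∘ ρ)) Y) : col e ≠ none ∧ ∃ v ∈ I e, ρ v = Y := by
  obtain ⟨v, hv, hvY⟩ := inr_mem_labels.1 he.2.1
  refine ⟨fun hnone => he.2.2 ?_, v, hv, Sum.inr_injective hvY⟩
  refine Set.Subset.antisymm ?_ (Set.singleton_subset_iff.2 he.2.1)
  rintro _ (⟨w, hw, rfl⟩ | ⟨a, ha, rfl⟩)
  · rw [Set.mem_singleton_iff, ← hvY]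
    exact congrArg Sum.inr (hρ hw hv)
  · simp_all

theorem exists_chains_of_le_value [Finite α] [Fintype V]
    (hk : ∀ φ : V → C ⊕ V, k ≤ value (labels I col φ)) : ∃ L : List (List α), k ≤ L.length ∧
      (∀ l ∈ L, l ≠ [] ∧ l.IsChain (Touch I)) ∧ (L.flatMap ends).Nodup ∧
      ∀ e ∈ L.flatMap ends, col e ≠ none ∧ (I e).Nonempty := by
  classical
  obtain ⟨ρ, hρ, hreach⟩ := exists_component_representative I
  let B : V → List α := fun Y =>
    (boundary (labels I col (Sum.inr ∘ ρ)) Y).toFinite.toFinset.toList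
  have hB : ∀ {Y e}, e ∈ B Y → col e ≠ none ∧ ∃ v ∈ I e, ρ v = Y := fun he =>
    coloured_of_mem_boundary_labels_inr hρ (by simpa [B] using he)
  have hlenB : ∀ Y, (B Y).length = (boundary (labels I col (Sum.inr ∘ ρ)) Y).ncard := fun Y => by
    rw [Finset.length_toList, Set.ncard_eq_toFinset_card]
  have hchains : ∀ Y, ∃ L : List (List α), L.length = (B Y).length / 2 ∧
      (∀ m ∈ L, m ≠ [] ∧ m.IsChain (Touch I)) ∧ (L.flatMap ends).Sublist (B Y) := by
    refine fun Y => exists_chains_of_reachable fun x hx y hy => ?_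
    obtain ⟨-, v, hv, hvY⟩ := hB hx
    obtain ⟨-, w, hw, hwY⟩ := hB hy
    exact hreach hv hw (hvY.trans hwY.symm)
  choose L hlen hchain hends using hchains
  have hsub : (((Finset.univ : Finset V).toList.flatMap L).flatMap ends).Sublist
      ((Finset.univ : Finset V).toList.flatMap B) := by
    rw [List.flatMap_assoc]
    exact List.Sublist.flatMap_right _ fun Y _ => hends Y
  refine ⟨(Finset.univ : Finset V).toList.flatMap L, ?_, ?_, List.Nodup.sublist hsub ?_,
    fun e he => ?_⟩
  · have := hk (Sum.inr ∘ ρ)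
    rw [value, bichromatic_labels_inr, Set.ncard_empty, zero_add] at this
    simpa [List.length_flatMap, hlen, hlenB] using this
  · simpa using fun l Y hl => hchain Y l hl
  · refine List.nodup_flatMap.2 ⟨fun Y _ => Finset.nodup_toList _, ?_⟩
    refine (Finset.nodup_toList _).imp fun {Y Y'} hne => List.disjoint_left.2 fun e he he' => hne ?_
    obtain ⟨-, v, hv, rfl⟩ := hB he
    obtain ⟨-, w, hw, rfl⟩ := hB he'
    exact hρ hv hw
  · obtain ⟨Y, -, hY⟩ := List.mem_flatMap.1 (hsub.subset he)
    exact ⟨(hB hY).1, (hB hY).2.imp fun v hv => hv.1⟩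

theorem nil_notMem_of_perm_ends {L L' : List (List α)} (hlen : L'.length = L.length)
    (hperm : (L'.flatMap ends).Perm (L.flatMap ends)) (hL : [] ∉ L) : [] ∉ L' := by
  classical
  have hcount : ∀ L : List (List α),
      (L.flatMap ends).length = 2 * L.countP (fun l => l ≠ []) := fun L => by
    induction L with
    | nil => rfl
    | cons l L ih =>
      cases l with
      | nil => simpa [ends] using ih
      | cons x l =>
        rw [List.flatMap_cons, List.length_append, ih, List.countP_cons_of_pos (by simp)]
        simp [ends, List.getLast?_cons, mul_add, add_comm]
  have hcountL : L.countP (fun l => l ≠ []) = L.length := List.countP_eq_length.2 (by grind)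
  have hL' := hperm.length_eq
  rw [hcount, hcount, hcountL, ← hlen] at hL'
  have := List.countP_eq_length.1 (Nat.eq_of_mul_eq_mul_left two_pos hL')
  exact fun h => by simpa using this [] h

theorem HasPacking.of_injective_colours [Finite α] [Fintype V] (hI : RankLETwo I)
    (hcol : ∀ ⦃e f⦄, (I e).Nonempty → (I f).Nonempty → col e ≠ none → col e = col f → e = f)
    (hk : ∀ φ : V → C ⊕ V, k ≤ value (labels I col φ)) : HasPacking (Touch I) col k := by
  obtain ⟨L, hkL, hchain, hnodup, hends⟩ := exists_chains_of_le_value hk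
  obtain ⟨L', hlen, hchain', hperm, hnodup'⟩ :=
    exists_disjoint_chains Touch.symm hI.touch_clawFree (fun l hl => (hchain l hl).2) hnodup
  have hnil := nil_notMem_of_perm_ends hlen hperm fun h => (hchain _ h).1 rfl
  refine (HasPacking.of_infix hnodup' fun l hl => ?_).mono (hkL.trans hlen.ge)
  have hl_ne : l ≠ [] := fun h => hnil (h ▸ hl)
  have hl_ends : ends l = [l.head hl_ne, l.getLast hl_ne] := by
    simp [ends, List.head?_eq_some_head hl_ne, List.getLast?_eq_some_getLast hl_ne]
  have hl_mem : ∀ x ∈ ends l, col x ≠ none ∧ (I x).Nonempty := fun x hx =>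
    hends x (hperm.subset (List.mem_flatMap.2 ⟨l, hl, hx⟩))
  have hl_nodup := (List.nodup_flatMap.1 (hperm.nodup_iff.2 hnodup)).1 l hl
  rw [hl_ends] at hl_mem hl_nodup
  obtain ⟨⟨hhead, hhead_I⟩, ⟨hlast, hlast_I⟩, -⟩ :=
    (List.forall_mem_cons.1 hl_mem).imp_right List.forall_mem_cons.1
  exact exists_colourPath_infix (hchain' l hl) (List.head_mem hl_ne) (List.getLast_mem hl_ne)
    hhead hlast fun h => (List.nodup_cons.1 hl_nodup).1 (by simp [← hcol hhead_I hlast_I hhead h])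

theorem delete_subset [DecidableEq α] (u e : α) : Function.update I u ∅ e ⊆ I e := by
  by_cases he : e = u <;> simp [he]

theorem HasPacking.exists_isStubPacking_of_delete [DecidableEq α]
    (h : HasPacking (Touch (Function.update I u ∅)) col k) (hu : col u = some d) (hdc : d ≠ c) :
    ∃ q Qs, IsStubPacking (Touch I) col c u q Qs ∧ Qs.length = k := by
  obtain ⟨Qs, hQs, rfl⟩ := h
  have huQs : ∀ l ∈ Qs, u ∉ l := fun l hl hul => by
    obtain ⟨y, hy⟩ := (hQs.colourPath l hl).exists_adj hul
    simp [Touch] at hy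
  refine ⟨[u], Qs, ⟨by simpa [hQs.nodup] using huQs, ?_,
    fun l hl => (hQs.colourPath l hl).mono fun _ _ h => h.mono (delete_subset u)⟩, rfl⟩
  exact ⟨List.isChain_singleton u, rfl, [], u, rfl, by simp, by simp [hu], by simpa [hu] using hdc⟩

theorem HasPacking.of_strand [DecidableEq α] {t x₁ : α} {R : List α} {P : List (List α)}
    (hnodup : ((s :: x₁ :: R) :: P).flatten.Nodup)
    (hstrand : Strand (Touch I) col s t (s :: x₁ :: R)) (hs : col s = some c) (ht : col t = some c)
    (hP : ∀ l ∈ P, ColourPath (Touch I) col l) (hvs : v ∈ I s) (hvx : v ∈ I x₁)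
    (herase : (∀ e, v ∈ I e → col e = some c) →
      HasPacking (Touch fun e => I e \ {v}) col (P.length + 1))
    (hcolour : ∀ u, v ∈ I u → col u = none →
      HasPacking (Touch I) (Function.update col u (some c)) (P.length + 1))
    (hdelete : ∀ u, v ∈ I u → HasPacking (Touch (Function.update I u ∅)) col P.length) :
    HasPacking (Touch I) col (P.length + 1) := by
  have haugment : ∀ u q Qs, v ∈ I u → IsStubPacking (Touch I) col c u q Qs →
      Qs.length = P.length → HasPacking (Touch I) col (P.length + 1) := fun u q Qs hvu hQs hlen =>
    hlen ▸ hQs.hasPacking Touch.symm hnodup hstrand hs ht hP ⟨v, hvs, hvu⟩ ⟨v, hvx, hvu⟩ hlen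
  by_cases hv : ∀ e, v ∈ I e → col e = some c
  · exact (herase hv).mono_adj fun _ _ h => h.mono fun _ => Set.sdiff_subset
  push Not at hv
  obtain ⟨u, hvu, hu⟩ := hv
  cases hcol : col u with
  | none =>
    rcases (hcolour u hvu hcol).exists_isStubPacking Touch.symm hcol with h | ⟨q, Qs, hQs, hlen⟩
    · exact h
    · exact haugment u q Qs hvu hQs (by omega)
  | some d =>
    obtain ⟨q, Qs, hQs, hlen⟩ := (hdelete u hvu).exists_isStubPacking_of_delete hcol
      fun hdc => hu (hcol.trans (congrArg some hdc))
    exact haugment u q Qs hvu hQs hlen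

/-- The measure for the induction in `HasPacking.of_forall_le_value`: the numbers of incidences, of
uncoloured elements, and of pairs of elements with the same colour, compared lexicographically. -/
noncomputable def complexity (I : α → Set V) (col : α → Option C) : ℕ ×ₗ ℕ ×ₗ ℕ :=
  toLex ({p : α × V | p.2 ∈ I p.1}.ncard, toLex ({e | col e = none}.ncard,
    {p : α × α | p.1 ≠ p.2 ∧ col p.1 = col p.2 ∧ col p.1 ≠ none}.ncard))

section Complexity

variable [Finite α]

theorem complexity_lt_of_incidence [Finite V] (hI : ∀ e, I' e ⊆ I e) (hv : v ∈ I u)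
    (hv' : v ∉ I' u) : complexity I' col < complexity I col := by
  refine Prod.Lex.toLex_lt_toLex.2 (Or.inl (Set.ncard_lt_ncard
    ⟨fun p hp => hI p.1 hp, fun h => ?_⟩))
  exact hv' (h (show (u, v) ∈ {p : α × V | p.2 ∈ I p.1} from hv))

theorem complexity_lt_of_coloured [DecidableEq α] (hu : col u = none) :
    complexity I (Function.update col u (some c)) < complexity I col := by
  refine Prod.Lex.toLex_lt_toLex.2 (Or.inr ⟨rfl, Prod.Lex.toLex_lt_toLex.2 (Or.inl ?_)⟩)
  refine Set.ncard_lt_ncard ⟨fun e he => ?_, fun h => ?_⟩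
  · by_cases heu : e = u <;> simp_all
  · simpa using h (show u ∈ {e | col e = none} from hu)

theorem complexity_lt_of_recoloured [DecidableEq α] {t : α} {c' : C} (hst : s ≠ t)
    (hs : col s = some c) (ht : col t = some c) (hc' : ∀ e, col e ≠ some c') :
    complexity I (Function.update col s (some c')) < complexity I col := by
  have huncoloured : {e | Function.update col s (some c') e = none} = {e | col e = none} := by
    ext e
    by_cases hes : e = s <;> simp [hes, hs]
  refine Prod.Lex.toLex_lt_toLex.2 (Or.inr ⟨rfl, Prod.Lex.toLex_lt_toLex.2 (Or.inr
    ⟨congrArg Set.ncard huncoloured, Set.ncard_lt_ncard ⟨fun p hp => ?_, fun h => ?_⟩⟩)⟩)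
  · simp only [Set.mem_ofPred_eq, Function.update_apply] at hp ⊢
    grind
  · have := @h (s, t) ⟨hst, hs.trans ht.symm, by simp [hs]⟩
    simp only [Set.mem_ofPred_eq, Function.update_apply] at this
    grind

end Complexity

theorem exists_fresh_colour [Infinite C] [Finite α] (col : α → Option C) :
    ∃ c, ∀ e, col e ≠ some c := by
  obtain ⟨c, hc⟩ := ((Set.finite_range col).preimage (Option.some_injective C).injOn).exists_notMem
  exact ⟨c, fun e he => hc ⟨e, he⟩⟩

theorem HasPacking.of_forall_le_value [Infinite C] [Finite α] [Fintype V] (hI : RankLETwo I)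
    (hk : ∀ φ : V → C ⊕ V, k ≤ value (labels I col φ)) : HasPacking (Touch I) col k := by
  classical
  induction hn : complexity I col using WellFoundedLT.induction generalizing I col k with
  | ind n ih =>
  subst hn
  by_cases hcol : ∀ ⦃e f⦄, (I e).Nonempty → (I f).Nonempty → col e ≠ none → col e = col f → e = f
  · exact .of_injective_colours hI hcol hk
  push Not at hcol
  obtain ⟨s, t, -, -, hs_col, hst_col, hst⟩ := hcol
  obtain ⟨c, hs⟩ := Option.ne_none_iff_exists'.1 hs_col
  obtain ⟨c', hc'⟩ := exists_fresh_colour col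
  have hrecoloured : HasPacking (Touch I) (Function.update col s (some c')) k :=
    ih _ (complexity_lt_of_recoloured hst hs (hst_col ▸ hs) hc') hI
      (le_value_of_recoloured hI hs hc' hk) rfl
  rcases hrecoloured.of_recoloured Touch.symm hs with
    h | ⟨t', x₁, R, P, hnodup, hstrand, ht', hP, rfl⟩
  · exact h
  obtain ⟨v, hvs, hvx⟩ : Touch I s x₁ := (List.isChain_cons_cons.1 hstrand.chain).1
  have : Nonempty V := ⟨v⟩
  refine .of_strand hnodup hstrand hs ht' hP hvs hvx (fun hv => ?_) (fun u _ hu => ?_)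
    fun u hvu => ?_
  · exact ih _ (complexity_lt_of_incidence (fun _ => Set.sdiff_subset) hvs (by simp))
      (hI.mono fun _ => Set.sdiff_subset) (le_value_of_erase hI hv hk) rfl
  · exact ih _ (complexity_lt_of_coloured hu) hI (le_value_of_coloured hI hu hk) rfl
  · exact ih _ (complexity_lt_of_incidence (delete_subset u) hvu (by simp))
      (hI.mono (delete_subset u)) (le_value_of_delete hI hk) rfl

end Incidence

theorem ncard_le_ncard_of_pairwiseDisjoint {ι α : Type*} [Finite α] {s : Set ι} {F : Set α}
    {f : ι → Set α} (hf : s.PairwiseDisjoint f) (h : ∀ i ∈ s, (F ∩ f i).Nonempty) :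
    s.ncard ≤ F.ncard := by
  choose g hg using h
  let g' (i : s) : F := ⟨g i i.2, (hg i i.2).1⟩
  refine Nat.card_le_card_of_injective g' fun i j hij => ?_
  have hij : g i i.2 = g j j.2 := congrArg Subtype.val hij
  exact Subtype.ext (hf.elim_set i.2 j.2 _ (hg i i.2).2 (hij ▸ (hg j j.2).2))

theorem ncard_biUnion_eq_sum {ι α : Type*} [Finite α] (s : Finset ι) {f : ι → Set α}
    (h : (s : Set ι).PairwiseDisjoint f) : (⋃ i ∈ s, f i).ncard = ∑ i ∈ s, (f i).ncard :=
  (s.finite_toSet.ncard_biUnion (fun _ _ => Set.toFinite _) h).trans (finsum_mem_coe_finset _ s)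

end Mader

namespace Multigraph

open Mader

variable {V E : Type*} {G : Multigraph V E} {S T X : Set V} {A : V → Set V} {e : E} {x y : V}

theorem mem_cut_iff (he : G.inc e = s(x, y)) : e ∈ G.cut X ↔ ¬(x ∈ X ↔ y ∈ X) := by
  constructor
  · rintro ⟨x', y', he', hx, hy⟩
    rcases Sym2.eq_iff.1 (he.symm.trans he') with ⟨rfl, rfl⟩ | ⟨rfl, rfl⟩ <;> tauto
  · intro h
    by_cases hx : x ∈ X
    · exact ⟨x, y, he, hx, fun hy => h (iff_of_true hx hy)⟩
    · exact ⟨y, x, he.trans Sym2.eq_swap, by tauto, hx⟩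

namespace Walk

variable {a b : V}

/-- The set of edges traversed by a walk. -/
def edgeSet (p : G.Walk a b) : Set E := {e | e ∈ p.edges}

@[simp] theorem edgeSet_nil : (nil a : G.Walk a a).edgeSet = ∅ := by
  simp [edgeSet, edges]

@[simp] theorem edgeSet_cons (he : G.inc e = s(a, x)) (p : G.Walk x b) :
    (cons e he p).edgeSet = insert e p.edgeSet :=
  List.setOfPred_mem_cons _ _

theorem finite_edgeSet (p : G.Walk a b) : p.edgeSet.Finite := List.finite_toSet _

theorem edgeSet_nonempty (p : G.Walk a b) (h : a ≠ b) : p.edgeSet.Nonempty := by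
  cases p with
  | nil => exact absurd rfl h
  | cons e he p => exact ⟨e, by simp⟩

theorem first_mem_support (p : G.Walk a b) : a ∈ p.support := by
  cases p <;> simp [support]

theorem mem_support_of_mem_inc (p : G.Walk a b) (he : e ∈ p.edgeSet) (hx : x ∈ G.inc e) :
    x ∈ p.support := by
  induction p with
  | nil => simp at he
  | cons f hf p ih =>
    rw [support, List.mem_cons]
    rcases (edgeSet_cons hf p ▸ he : e ∈ insert f p.edgeSet) with rfl | he
    · rcases Sym2.mem_iff.1 (hf ▸ hx) with rfl | rfl
      exacts [Or.inl rfl, Or.inr p.first_mem_support]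
    · exact Or.inr (ih he)

theorem even_ncard_cut_inter_edgeSet (p : G.Walk a b) (hp : p.support.Nodup) (X : Set V) :
    Even (G.cut X ∩ p.edgeSet).ncard ↔ (a ∈ X ↔ b ∈ X) := by
  induction p with
  | nil => simp
  | @cons u v w e he p ih =>
    rw [support, List.nodup_cons] at hp
    have hep : e ∉ p.edgeSet := fun h => hp.1 (p.mem_support_of_mem_inc h (by simp [he]))
    specialize ih hp.2
    rw [edgeSet_cons]
    by_cases heX : e ∈ G.cut X
    · rw [Set.inter_insert_of_mem heX, Set.ncard_insert_of_notMem (fun h => hep h.2)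
        (p.finite_edgeSet.inter_of_right _), Nat.even_add_one, ih]
      have := (mem_cut_iff he).1 heX
      tauto
    · rw [Set.inter_insert_of_notMem heX, ih]
      have := mt (mem_cut_iff he).2 heX
      tauto

end Walk

theorem IsComponentOf.mem_of_inc {K : Set V} (hK : G.IsComponentOf K S) (he : G.inc e = s(x, y))
    (hx : x ∈ K) (hy : y ∈ S) : y ∈ K := by
  refine (hK.2.2 x hx y hy).1 ⟨.cons e he (.nil y), fun z hz => ?_⟩
  rcases List.mem_pair.1 hz with rfl | rfl
  exacts [hK.2.1 hx, hy]

theorem IsComponentOf.eq_of_mem {K K' : Set V} (hK : G.IsComponentOf K S)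
    (hK' : G.IsComponentOf K' S) (hx : x ∈ K) (hx' : x ∈ K') : K = K' := by
  ext y
  constructor
  · exact fun hy => (hK'.2.2 x hx' y (hK.2.1 hy)).1 ((hK.2.2 x hx y (hK.2.1 hy)).2 hy)
  · exact fun hy => (hK.2.2 x hx y (hK'.2.1 hy)).1 ((hK'.2.2 x hx' y (hK'.2.1 hy)).2 hy)

theorem IsComponentOf.exists_of_mem_cut {K : Set V} (hK : G.IsComponentOf K S)
    (he : e ∈ G.cut K) : ∃ x y, G.inc e = s(x, y) ∧ x ∈ K ∧ y ∉ S := by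
  obtain ⟨x, y, hxy, hx, hy⟩ := he
  exact ⟨x, y, hxy, hx, fun hyS => hy (hK.mem_of_inc hxy hx hyS)⟩

theorem pairwiseDisjoint_cut_isComponentOf :
    {K | G.IsComponentOf K S}.PairwiseDisjoint G.cut := by
  intro K hK K' hK' hne
  refine Set.disjoint_left.2 fun e he he' => hne ?_
  obtain ⟨x, y, hxy, hx, -⟩ := hK.exists_of_mem_cut he
  obtain ⟨x', y', hxy', hx', hy'⟩ := hK'.exists_of_mem_cut he'
  rcases Sym2.eq_iff.1 (hxy.symm.trans hxy') with ⟨rfl, rfl⟩ | ⟨rfl, rfl⟩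
  · exact hK.eq_of_mem hK' hx hx'
  · exact absurd (hK.2.1 hx) hy'

theorem ReachableIn.trans {z : V} (hxy : G.ReachableIn S x y) (hyz : G.ReachableIn S y z) :
    G.ReachableIn S x z := by
  obtain ⟨p, hp⟩ := hxy
  induction p with
  | nil => exact hyz
  | cons e he p ih =>
    simp only [Walk.support, List.mem_cons, forall_eq_or_imp] at hp
    obtain ⟨q, hq⟩ := ih hyz hp.2
    exact ⟨.cons e he q, by simpa [Walk.support] using ⟨hp.1, hq⟩⟩

theorem ReachableIn.symm (h : G.ReachableIn S x y) : G.ReachableIn S y x := by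
  obtain ⟨p, hp⟩ := h
  induction p with
  | nil v => exact ⟨.nil v, hp⟩
  | cons e he p ih =>
    simp only [Walk.support, List.mem_cons, forall_eq_or_imp] at hp
    refine (ih hp.2).trans ⟨.cons e (he.trans Sym2.eq_swap) (.nil _), fun z hz => ?_⟩
    rcases List.mem_pair.1 hz with rfl | rfl
    exacts [hp.2 _ p.first_mem_support, hp.1]

theorem ReachableIn.mem_right (h : G.ReachableIn S x y) : y ∈ S := by
  obtain ⟨p, hp⟩ := h.symm
  exact hp _ p.first_mem_support

theorem isComponentOf_reachableIn (hx : x ∈ S) : G.IsComponentOf {y | G.ReachableIn S x y} S :=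
  ⟨⟨x, .nil x, by simpa [Walk.support] using hx⟩, fun _ hy => ReachableIn.mem_right hy,
    fun _ hy _ _ => ⟨ReachableIn.trans hy, (ReachableIn.symm hy).trans⟩⟩

theorem ReachableIn.mem_of_closed (h : G.ReachableIn S x y) (hx : x ∈ X)
    (hX : ∀ ⦃e x y⦄, G.inc e = s(x, y) → x ∈ X → y ∈ S → y ∈ X) : y ∈ X := by
  obtain ⟨p, hp⟩ := h
  induction p with
  | nil => exact hx
  | cons e he p ih =>
    simp only [Walk.support, List.mem_cons, forall_eq_or_imp] at hp
    exact ih (hX he hx (hp.2 _ p.first_mem_support)) hp.2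

/-- The components of the subgraph induced by `S` which are joined to the rest of the graph by an
odd number of edges, the obstructive components if `S` is the complement of a `T`-partition. -/
def oddComponents (G : Multigraph V E) (S : Set V) : Set (Set V) :=
  {Y | G.IsComponentOf Y S ∧ Odd (G.cut Y).ncard}

theorem exists_oddComponent_subset [Finite V] [Finite E] (hXS : X ⊆ S)
    (hX : ∀ ⦃e x y⦄, G.inc e = s(x, y) → x ∈ X → y ∈ S → y ∈ X) (hodd : Odd (G.cut X).ncard) :
    ∃ K ∈ G.oddComponents S, K ⊆ X := by
  let 𝒦 := (Set.toFinite {K | G.IsComponentOf K S ∧ K ⊆ X}).toFinset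
  have h𝒦 {K} : K ∈ 𝒦 ↔ G.IsComponentOf K S ∧ K ⊆ X := by simp [𝒦]
  have hcut : G.cut X = ⋃ K ∈ 𝒦, G.cut K := by
    ext e
    simp only [Set.mem_iUnion, exists_prop, h𝒦]
    constructor
    · rintro ⟨x, y, he, hx, hy⟩
      refine ⟨{z | G.ReachableIn S x z}, ⟨isComponentOf_reachableIn (hXS hx),
        fun z hz => hz.mem_of_closed hx hX⟩, x, y, he, ⟨.nil x, ?_⟩, ?_⟩
      · simpa [Walk.support] using hXS hx
      · exact fun h => hy (hX he hx h.mem_right)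
    · rintro ⟨K, ⟨hK, hKX⟩, he⟩
      obtain ⟨x, y, he, hx, hy⟩ := hK.exists_of_mem_cut he
      exact ⟨x, y, he, hKX hx, fun h => hy (hXS h)⟩
  rw [hcut, ncard_biUnion_eq_sum 𝒦 (pairwiseDisjoint_cut_isComponentOf.subset fun K hK =>
    (h𝒦.1 hK).1)] at hodd
  by_contra! h
  refine Nat.not_even_iff_odd.2 hodd (Finset.even_sum _ fun K hK => ?_)
  exact Nat.not_odd_iff_even.1 fun hKodd => h K ⟨(h𝒦.1 hK).1, hKodd⟩ (h𝒦.1 hK).2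

variable (G) in
/-- Twice the bound which a `T`-partition `A` imposes on the number of edge-disjoint `T`-paths.
The truncated subtraction is harmless by `TPathDisjoint.two_mul_ncard_add_le`. -/
noncomputable def partitionBound [Finite V] (T : Set V) (A : V → Set V) : ℕ :=
  ∑ t ∈ T.toFinite.toFinset, (G.cut (A t)).ncard - (G.oddComponents (⋃ t ∈ T, A t)ᶜ).ncard

theorem IsTPartition.mem_iff {s t : V} (hA : IsTPartition T A) (hs : s ∈ T) (ht : t ∈ T) :
    s ∈ A t ↔ s = t := by
  simpa [hs] using Set.ext_iff.1 (hA.1 t ht) s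

theorem isTPartition_singleton (T : Set V) : IsTPartition T fun t => {t} :=
  ⟨fun _ ht => Set.inter_eq_left.2 (Set.singleton_subset_iff.2 ht),
    fun _ _ _ _ hne => Set.disjoint_singleton.2 hne⟩

theorem IsTPartition.two_le_sum_cut [Finite V] (hA : IsTPartition T A) (p : G.TPath T) :
    2 ≤ ∑ t ∈ T.toFinite.toFinset, (G.cut (A t) ∩ p.walk.edgeSet).ncard := by
  classical
  have hcross {t} (ht : ¬(p.first ∈ A t ↔ p.last ∈ A t)) :
      1 ≤ (G.cut (A t) ∩ p.walk.edgeSet).ncard := by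
    rw [← p.walk.even_ncard_cut_inter_edgeSet p.support_nodup] at ht
    exact (Nat.not_even_iff_odd.1 ht).pos
  have hfirst := hcross (t := p.first) (by
    simp [hA.mem_iff p.first_mem p.first_mem, hA.mem_iff p.last_mem p.first_mem, p.ne.symm])
  have hlast := hcross (t := p.last) (by
    simp [hA.mem_iff p.last_mem p.last_mem, hA.mem_iff p.first_mem p.last_mem, p.ne])
  calc 2 ≤ ∑ t ∈ {p.first, p.last}, (G.cut (A t) ∩ p.walk.edgeSet).ncard := by
        rw [Finset.sum_pair p.ne]
        exact Nat.add_le_add hfirst hlast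
    _ ≤ _ := by
        refine Finset.sum_le_sum_of_subset ?_
        simp [Set.insert_subset_iff, p.first_mem, p.last_mem]

variable {P : Set (G.TPath T)}

theorem TPathDisjoint.pairwiseDisjoint (hP : G.TPathDisjoint P) :
    P.PairwiseDisjoint fun p => p.walk.edgeSet :=
  fun p hp q hq hne => Set.disjoint_left.2 (hP p hp q hq hne)

theorem TPathDisjoint.finite [Finite E] (hP : G.TPathDisjoint P) : P.Finite := by
  refine (hP.pairwiseDisjoint.finite_biUnion_iff.1 (Set.toFinite _)).2.subset fun p hp => ?_
  exact ⟨hp, p.walk.edgeSet_nonempty p.ne⟩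

theorem TPathDisjoint.ncard_inter_biUnion [Finite E] (hP : G.TPathDisjoint P) (F : Set E) :
    (F ∩ ⋃ p ∈ P, p.walk.edgeSet).ncard =
      ∑ p ∈ hP.finite.toFinset, (F ∩ p.walk.edgeSet).ncard := by
  rw [← ncard_biUnion_eq_sum]
  · simp [Set.inter_iUnion₂]
  · simpa using hP.pairwiseDisjoint.mono fun p => Set.inter_subset_right

theorem TPathDisjoint.two_mul_ncard_le_sum_cut [Finite V] [Finite E] (hP : G.TPathDisjoint P)
    (hA : IsTPartition T A) :
    2 * P.ncard ≤
      ∑ t ∈ T.toFinite.toFinset, (G.cut (A t) ∩ ⋃ p ∈ P, p.walk.edgeSet).ncard := by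
  simp only [hP.ncard_inter_biUnion]
  rw [Finset.sum_comm, Set.ncard_eq_toFinset_card P hP.finite, mul_comm]
  exact Finset.card_nsmul_le_sum _ _ _ fun p _ => hA.two_le_sum_cut p

theorem TPathDisjoint.exists_unused_mem_cut [Finite E] (hP : G.TPathDisjoint P)
    (hodd : Odd (G.cut X).ncard) (hX : Disjoint X T) :
    ∃ e ∈ G.cut X, e ∉ ⋃ p ∈ P, p.walk.edgeSet := by
  by_contra! h
  rw [← Set.inter_eq_left.2 h, hP.ncard_inter_biUnion] at hodd
  refine Nat.not_even_iff_odd.2 hodd (Finset.even_sum _ fun p _ => ?_)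
  rw [p.walk.even_ncard_cut_inter_edgeSet p.support_nodup]
  exact iff_of_false (hX.notMem_of_mem_right p.first_mem) (hX.notMem_of_mem_right p.last_mem)

theorem ncard_oddComponents_le [Finite V] [Finite E] {F : Set E}
    (hF : ∀ K ∈ G.oddComponents (⋃ t ∈ T, A t)ᶜ, ∃ e ∈ G.cut K, e ∉ F) :
    (G.oddComponents (⋃ t ∈ T, A t)ᶜ).ncard ≤
      ∑ t ∈ T.toFinite.toFinset, (G.cut (A t) \ F).ncard := by
  refine le_trans ?_ (Finset.set_ncard_biUnion_le _ _)
  refine ncard_le_ncard_of_pairwiseDisjoint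
    (pairwiseDisjoint_cut_isComponentOf.subset fun K hK => hK.1) fun K hK => ?_
  obtain ⟨e, heK, heF⟩ := hF K hK
  obtain ⟨x, y, hxy, hx, hy⟩ := hK.1.exists_of_mem_cut heK
  obtain ⟨t, ht, hyt⟩ : ∃ t ∈ T, y ∈ A t := by simpa using hy
  have hxt : x ∉ A t := fun h => hK.1.2.1 hx (Set.mem_biUnion ht h)
  have het : e ∈ G.cut (A t) := ⟨y, x, hxy.trans Sym2.eq_swap, hyt, hxt⟩
  exact ⟨e, Set.mem_biUnion (T.toFinite.mem_toFinset.2 ht) ⟨het, heF⟩, heK⟩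

theorem TPathDisjoint.two_mul_ncard_add_le [Finite V] [Finite E] (hP : G.TPathDisjoint P)
    (hA : IsTPartition T A) :
    2 * P.ncard + (G.oddComponents (⋃ t ∈ T, A t)ᶜ).ncard ≤
      ∑ t ∈ T.toFinite.toFinset, (G.cut (A t)).ncard := by
  set F := ⋃ p ∈ P, p.walk.edgeSet
  have hunused : ∀ K ∈ G.oddComponents (⋃ t ∈ T, A t)ᶜ, ∃ e ∈ G.cut K, e ∉ F := by
    refine fun K hK => hP.exists_unused_mem_cut hK.2 (Set.disjoint_left.2 fun t htK ht => ?_)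
    exact hK.1.2.1 htK (Set.mem_biUnion ht ((hA.mem_iff ht ht).2 rfl))
  calc _ ≤ ∑ t ∈ T.toFinite.toFinset, (G.cut (A t) ∩ F).ncard +
        ∑ t ∈ T.toFinite.toFinset, (G.cut (A t) \ F).ncard :=
        Nat.add_le_add (hP.two_mul_ncard_le_sum_cut hA) (ncard_oddComponents_le hunused)
    _ = _ := by
        rw [← Finset.sum_add_distrib]
        exact Finset.sum_congr rfl fun t _ => Set.ncard_inter_add_ncard_sdiff_eq_ncard _ _

theorem IsTPartition.pairwiseDisjoint (hA : IsTPartition T A) : T.PairwiseDisjoint A :=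
  fun s hs t ht hne => hA.2 s hs t ht hne

theorem sum_ncard_cut_inter_le [Finite E] (s : Finset V) (hA : (s : Set V).PairwiseDisjoint A)
    (F : Set E) : ∑ t ∈ s, (G.cut (A t) ∩ F).ncard ≤ 2 * F.ncard := by
  classical
  let r (t : V) (e : E) : Prop := e ∈ G.cut (A t)
  have hF : F.Finite := Set.toFinite F
  have hone (v : V) : (s.filter fun t => v ∈ A t).card ≤ 1 :=
    Finset.card_le_one.2 fun t ht t' ht' => hA.elim_set (Finset.mem_filter.1 ht).1
      (Finset.mem_filter.1 ht').1 v (Finset.mem_filter.1 ht).2 (Finset.mem_filter.1 ht').2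
  have htwo (e : E) : (s.bipartiteBelow r e).card ≤ 2 := by
    obtain ⟨⟨x, y⟩, hxy⟩ := Sym2.mk_surjective (G.inc e)
    refine (Finset.card_le_card (t := (s.filter fun t => x ∈ A t) ∪ s.filter fun t => y ∈ A t)
      fun t ht => ?_).trans ((Finset.card_union_le _ _).trans (Nat.add_le_add (hone x) (hone y)))
    simp only [Finset.bipartiteBelow, r, mem_cut_iff hxy.symm, Finset.mem_filter,
      Finset.mem_union] at ht ⊢
    tauto
  calc ∑ t ∈ s, (G.cut (A t) ∩ F).ncard
      = ∑ t ∈ s, (hF.toFinset.bipartiteAbove r t).card := by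
        refine Finset.sum_congr rfl fun t _ => ?_
        rw [← Set.ncard_coe_finset]
        congr 1
        ext e
        simp [Finset.bipartiteAbove, r, and_comm]
    _ = ∑ e ∈ hF.toFinset, (s.bipartiteBelow r e).card :=
        Finset.sum_card_bipartiteAbove_eq_sum_card_bipartiteBelow _
    _ ≤ 2 * F.ncard := by
        rw [Set.ncard_eq_toFinset_card F hF, mul_comm]
        exact Finset.sum_le_card_nsmul _ _ _ fun e _ => htwo e

theorem exists_oddComponent_subset_of_cut_subset [Finite V] [Finite E]
    (hXA : ∀ t ∈ T, Disjoint X (A t)) (hX : G.cut X ⊆ ⋃ t ∈ T, G.cut (A t))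
    (hodd : Odd (G.cut X).ncard) : ∃ K ∈ G.oddComponents (⋃ t ∈ T, A t)ᶜ, K ⊆ X := by
  have hXS : X ⊆ (⋃ t ∈ T, A t)ᶜ := by
    simpa [Set.subset_compl_iff_disjoint_right] using hXA
  refine exists_oddComponent_subset hXS (fun e x y he hx hy => ?_) hodd
  by_contra hyX
  obtain ⟨t, ht, het⟩ : ∃ t ∈ T, e ∈ G.cut (A t) := by simpa using hX ⟨x, y, he, hx, hyX⟩
  have hxt : x ∉ A t := fun h => hXS hx (Set.mem_biUnion ht h)
  have hyt : y ∉ A t := fun h => hy (Set.mem_biUnion ht h)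
  exact (mem_cut_iff he).1 het (iff_of_false hxt hyt)

theorem pairwiseDisjoint_cut_inter_cut (hA : T.PairwiseDisjoint A)
    (hXA : ∀ t ∈ T, Disjoint X (A t)) : T.PairwiseDisjoint fun t => G.cut (A t) ∩ G.cut X := by
  intro s hs t ht hne
  refine Set.disjoint_left.2 fun e ⟨hes, heX⟩ ⟨het, _⟩ => ?_
  obtain ⟨x, y, hxy, hx, hy⟩ := heX
  have hxs := (hXA s hs).notMem_of_mem_left hx
  have hxt := (hXA t ht).notMem_of_mem_left hx
  rw [mem_cut_iff hxy] at hes het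
  exact (hA hs ht hne).notMem_of_mem_left (show y ∈ A s by tauto) (show y ∈ A t by tauto)

open Classical in
theorem sum_ncard_cut_inter_cut_le [Finite V] [Finite E] (hA : T.PairwiseDisjoint A)
    (hXA : ∀ t ∈ T, Disjoint X (A t)) :
    ∑ t ∈ T.toFinite.toFinset, (G.cut (A t) ∩ G.cut X).ncard ≤ 2 * ((G.cut X).ncard / 2) +
      if ∃ K ∈ G.oddComponents (⋃ t ∈ T, A t)ᶜ, K ⊆ X then 1 else 0 := by
  rw [← ncard_biUnion_eq_sum _ (by simpa using pairwiseDisjoint_cut_inter_cut hA hXA)]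
  have hsub : (⋃ t ∈ T.toFinite.toFinset, G.cut (A t) ∩ G.cut X) ⊆ G.cut X :=
    Set.iUnion₂_subset fun t _ => Set.inter_subset_right
  have hle := Set.ncard_le_ncard hsub
  split_ifs with hK
  · lia
  rcases hsub.eq_or_ssubset with heq | hssub
  · have hXT : G.cut X ⊆ ⋃ t ∈ T, G.cut (A t) := by
      rw [← heq]
      exact Set.iUnion₂_mono' fun t ht => ⟨t, by simpa using ht, Set.inter_subset_left⟩
    have heven := Nat.not_odd_iff_even.1
      (mt (exists_oddComponent_subset_of_cut_subset hXA hXT) hK)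
    grind
  · have := Set.ncard_lt_ncard hssub
    lia

open Classical in
theorem sum_ite_oddComponent_subset_le {ι : Type*} [Fintype ι] [Finite V] {S : Set V}
    {B : ι → Set V} (hB : Pairwise (Function.onFun Disjoint B)) :
    (∑ i, if ∃ K ∈ G.oddComponents S, K ⊆ B i then 1 else 0) ≤ (G.oddComponents S).ncard := by
  rw [Finset.sum_boole, ← Set.ncard_coe_finset, Nat.cast_id]
  refine ncard_le_ncard_of_pairwiseDisjoint (f := fun i => {K | K.Nonempty ∧ K ⊆ B i}) ?_ ?_
  · refine fun i _ j _ hne => Set.disjoint_left.2 fun K ⟨⟨v, hv⟩, hKi⟩ ⟨_, hKj⟩ => ?_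
    exact (hB hne).notMem_of_mem_left (hKi hv) (hKj hv)
  · intro i hi
    obtain ⟨K, hK, hKi⟩ := (Finset.mem_filter.1 hi).2
    exact ⟨K, hK, hK.1.1, hKi⟩

theorem ncard_cut_le_of_subset {ι : Type*} [Fintype ι] [Finite E] {B : ι → Set V} {F : Set E}
    (h : G.cut X ⊆ F ∪ ⋃ i, G.cut (B i)) :
    (G.cut X).ncard ≤ (G.cut X ∩ F).ncard + ∑ i, (G.cut X ∩ G.cut (B i)).ncard := by
  calc (G.cut X).ncard = (G.cut X ∩ F ∪ ⋃ i ∈ Finset.univ, G.cut X ∩ G.cut (B i)).ncard := by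
        congr 1
        simpa [← Set.inter_iUnion, ← Set.inter_union_distrib_left] using h
    _ ≤ _ := (Set.ncard_union_le _ _).trans
        (Nat.add_le_add_left (Finset.set_ncard_biUnion_le _ _) _)

theorem sum_ncard_cut_le {ι : Type*} [Fintype ι] [Finite V] [Finite E] {B : ι → Set V}
    {F : Set E} (hA : T.PairwiseDisjoint A) (hB : Pairwise (Function.onFun Disjoint B))
    (hBA : ∀ i, ∀ t ∈ T, Disjoint (B i) (A t))
    (hAF : ∀ t ∈ T, G.cut (A t) ⊆ F ∪ ⋃ i, G.cut (B i)) :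
    ∑ t ∈ T.toFinite.toFinset, (G.cut (A t)).ncard ≤
      2 * (F.ncard + ∑ i, (G.cut (B i)).ncard / 2) +
        (G.oddComponents (⋃ t ∈ T, A t)ᶜ).ncard := by
  classical
  have hodd := sum_ite_oddComponent_subset_le (G := G) (S := (⋃ t ∈ T, A t)ᶜ) hB
  calc ∑ t ∈ T.toFinite.toFinset, (G.cut (A t)).ncard
      ≤ ∑ t ∈ T.toFinite.toFinset, (G.cut (A t) ∩ F).ncard +
        ∑ i, ∑ t ∈ T.toFinite.toFinset, (G.cut (A t) ∩ G.cut (B i)).ncard := by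
        rw [Finset.sum_comm, ← Finset.sum_add_distrib]
        exact Finset.sum_le_sum fun t ht => ncard_cut_le_of_subset (hAF t (by simpa using ht))
    _ ≤ 2 * F.ncard + ∑ i, (2 * ((G.cut (B i)).ncard / 2) +
        if ∃ K ∈ G.oddComponents (⋃ t ∈ T, A t)ᶜ, K ⊆ B i then 1 else 0) :=
        Nat.add_le_add (sum_ncard_cut_inter_le _ (by simpa using hA) F)
          (Finset.sum_le_sum fun i _ => sum_ncard_cut_inter_cut_le hA (hBA i))
    _ ≤ _ := by
        rw [Finset.sum_add_distrib, ← Finset.mul_sum]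
        lia

section Pendants

variable {N : ℕ} {φ : V → (V ⊕ ℕ) ⊕ V} {t : V}

/-- The incidences of the edges of `G` and of `N` pendant elements attached to every vertex of
`T`. -/
def pendantIncidence (G : Multigraph V E) (T : Set V) (N : ℕ) : E ⊕ T × Fin N → Set V :=
  Sum.elim (fun e => {v | v ∈ G.inc e}) fun q => {↑q.1}

/-- The pendant elements at `t` have colour `t`, the edges are uncoloured. The colours in `ℕ` are
not used, they only make the palette infinite. -/
def pendantColour (E : Type*) (T : Set V) (N : ℕ) : E ⊕ T × Fin N → Option (V ⊕ ℕ) :=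
  Sum.elim (fun _ => none) fun q => some (.inl q.1)

/-- The labels of the edges and pendant elements when the vertices are labelled by `φ`. -/
def pendantLabels (G : Multigraph V E) (T : Set V) (N : ℕ) (φ : V → (V ⊕ ℕ) ⊕ V) :
    E ⊕ T × Fin N → Set ((V ⊕ ℕ) ⊕ V) :=
  labels (pendantIncidence G T N) (pendantColour E T N) φ

theorem pendantLabels_inl (he : G.inc e = s(x, y)) :
    pendantLabels G T N φ (.inl e) = {φ x, φ y} := by
  ext
  simp [pendantLabels, labels, pendantIncidence, pendantColour, he, eq_comm]

theorem pendantLabels_inr (ht : t ∈ T) (i : Fin N) :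
    pendantLabels G T N φ (.inr (⟨t, ht⟩, i)) = {φ t, .inl (.inl t)} := by
  ext
  simp [pendantLabels, labels, pendantIncidence, pendantColour, eq_comm, or_comm]

theorem isTPartition_preimage (hφ : ∀ t ∈ T, φ t = .inl (.inl t)) :
    IsTPartition T fun t => φ ⁻¹' {.inl (.inl t)} := by
  refine ⟨fun t ht => ?_, fun s _ t _ hne => Disjoint.preimage φ (by simpa using hne)⟩
  ext v
  constructor
  · rintro ⟨hvt, hv⟩
    simpa [hφ v hv] using hvt
  · rintro rfl
    exact ⟨hφ v ht, ht⟩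

theorem ncard_cut_preimage_le [Finite V] [Finite E] (Y : V) :
    (G.cut (φ ⁻¹' {.inr Y})).ncard ≤ (boundary (pendantLabels G T N φ) Y).ncard := by
  refine Set.ncard_le_ncard_of_injOn Sum.inl (fun e he => ?_) Sum.inl_injective.injOn
  obtain ⟨x, y, hxy, hx, hy⟩ := he
  rw [Set.mem_preimage, Set.mem_singleton_iff] at hx hy
  simp only [boundary, mem_bichromatic, Set.mem_ofPred_eq, pendantLabels_inl hxy, hx]
  refine ⟨?_, by simp, fun h => hy (h.subset (by simp))⟩
  rintro ⟨c, d, hc, hd, hne⟩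
  simp only [Set.mem_insert_iff, Set.mem_singleton_iff, reduceCtorEq, false_or] at hc hd
  exact hne (Sum.inl.inj (hc.trans hd.symm))

theorem cut_preimage_subset (t : V) :
    G.cut (φ ⁻¹' {.inl (.inl t)}) ⊆
      Sum.inl ⁻¹' bichromatic (pendantLabels G T N φ) ∪ ⋃ Y, G.cut (φ ⁻¹' {.inr Y}) := by
  rintro e ⟨x, y, hxy, hx, hy⟩
  rw [Set.mem_preimage, Set.mem_singleton_iff] at hx hy
  rcases hφy : φ y with c | Y
  · refine Or.inl (mem_bichromatic.2 ⟨.inl t, c, ?_, ?_, fun h => hy (h ▸ hφy)⟩) <;>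
      simp [pendantLabels_inl hxy, hx, hφy]
  · exact Or.inr (Set.mem_iUnion.2 ⟨Y, y, x, hxy.trans Sym2.eq_swap, hφy, by simp [hx]⟩)

theorem sum_ncard_cut_preimage_le [Fintype V] [Finite E] (hφ : ∀ t ∈ T, φ t = .inl (.inl t)) :
    ∑ t ∈ T.toFinite.toFinset, (G.cut (φ ⁻¹' {.inl (.inl t)})).ncard ≤
      2 * value (pendantLabels G T N φ) +
        (G.oddComponents (⋃ t ∈ T, φ ⁻¹' {.inl (.inl t)})ᶜ).ncard := by
  have hbi : (Sum.inl ⁻¹' bichromatic (pendantLabels G T N φ) : Set E).ncard ≤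
      (bichromatic (pendantLabels G T N φ)).ncard :=
    Set.ncard_le_ncard_of_injOn Sum.inl (fun _ he => he) Sum.inl_injective.injOn
  have hhalf : ∑ Y, (G.cut (φ ⁻¹' {.inr Y})).ncard / 2 ≤
      ∑ Y, (boundary (pendantLabels G T N φ) Y).ncard / 2 :=
    Finset.sum_le_sum fun Y _ => Nat.div_le_div_right (ncard_cut_preimage_le Y)
  have hsum := sum_ncard_cut_le (T := T) (B := fun Y : V => φ ⁻¹' {.inr Y})
    (isTPartition_preimage hφ).pairwiseDisjoint
    (fun Y Z hne => Disjoint.preimage φ (by simpa using hne))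
    (fun Y t _ => Disjoint.preimage φ (by simp))
    (fun t _ => cut_preimage_subset (G := G) (T := T) (N := N) t)
  rw [value]
  lia

theorem le_value_pendantLabels_of_ne [Fintype V] [Finite E] (ht : t ∈ T)
    (hφ : φ t ≠ .inl (.inl t)) : N / 2 ≤ value (pendantLabels G T N φ) := by
  have hcard {F : Set (E ⊕ T × Fin N)} (hF : ∀ i, .inr (⟨t, ht⟩, i) ∈ F) : N ≤ F.ncard := by
    have hinj : Function.Injective fun i : Fin N => (.inr (⟨t, ht⟩, i) : E ⊕ T × Fin N) :=
      fun i j hij => by simpa using hij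
    calc N = (Set.range fun i : Fin N => (.inr (⟨t, ht⟩, i) : E ⊕ T × Fin N)).ncard := by
          rw [Set.ncard_range_of_injective hinj, Nat.card_fin]
      _ ≤ F.ncard := Set.ncard_le_ncard (Set.range_subset_iff.2 hF)
  rcases hφt : φ t with c | Y
  · have hN := hcard (F := bichromatic (pendantLabels G T N φ)) fun i =>
      mem_bichromatic.2 ⟨c, .inl t, by simp [pendantLabels_inr, hφt],
        by simp [pendantLabels_inr], fun h => hφ (h ▸ hφt)⟩
    rw [value]
    lia
  · have hN := hcard (F := boundary (pendantLabels G T N φ) Y) fun i => by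
      refine ⟨fun h => ?_, by simp [pendantLabels_inr, hφt], fun h => ?_⟩
      · obtain ⟨c, d, hc, hd, hne⟩ := mem_bichromatic.1 h
        grind [pendantLabels_inr]
      · rw [pendantLabels_inr] at h
        simpa using h.subset (Or.inr rfl)
    have hY := Finset.single_le_sum (f := fun Y => (boundary (pendantLabels G T N φ) Y).ncard / 2)
      (fun _ _ => Nat.zero_le _) (Finset.mem_univ Y)
    rw [value]
    lia

theorem le_value_pendantLabels [Fintype V] [Finite E] {m : ℕ}
    (hm : ∀ A, IsTPartition T A → m ≤ G.partitionBound T A) :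
    (m + 1) / 2 ≤ value (pendantLabels G T (m + 1) φ) := by
  by_cases hφ : ∀ t ∈ T, φ t = .inl (.inl t)
  · have hA := hm _ (isTPartition_preimage hφ)
    have hsum := sum_ncard_cut_preimage_le (G := G) (N := m + 1) hφ
    rw [partitionBound] at hA
    lia
  · push Not at hφ
    obtain ⟨t, ht, hne⟩ := hφ
    exact le_value_pendantLabels_of_ne ht hne

end Pendants

namespace Walk

variable {a b : V}

theorem exists_suffix (p : G.Walk a b) (hx : x ∈ p.support) :
    ∃ q : G.Walk x b, q.support <:+ p.support ∧ q.edgeSet ⊆ p.edgeSet := by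
  induction p with
  | nil v =>
    obtain rfl : x = v := by simpa [support] using hx
    exact ⟨nil x, List.suffix_rfl, subset_rfl⟩
  | cons e he p ih =>
    rcases List.mem_cons.1 hx with rfl | hx
    · exact ⟨cons e he p, List.suffix_rfl, subset_rfl⟩
    · obtain ⟨q, hqp, hq⟩ := ih hx
      exact ⟨q, hqp.trans (List.suffix_cons _ _), hq.trans (by simp)⟩

theorem exists_nodup_support (p : G.Walk a b) :
    ∃ q : G.Walk a b, q.support.Nodup ∧ q.edgeSet ⊆ p.edgeSet := by
  induction p with
  | nil v => exact ⟨nil v, by simp [support], subset_rfl⟩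
  | @cons u _ _ e he p ih =>
    obtain ⟨q, hnodup, hq⟩ := ih
    by_cases hu : u ∈ q.support
    · obtain ⟨r, hrq, hr⟩ := q.exists_suffix hu
      exact ⟨r, hnodup.sublist hrq.sublist, (hr.trans hq).trans (by simp)⟩
    · refine ⟨cons e he q, List.nodup_cons.2 ⟨hu, hnodup⟩, ?_⟩
      simpa using Set.insert_subset_insert hq

theorem exists_TPath_of_nodup (p : G.Walk a b) (hp : p.support.Nodup) (hb : b ∈ T)
    (hT : ∃ x ∈ p.support, x ∈ T ∧ x ≠ b) : ∃ q : G.TPath T, q.walk.edgeSet ⊆ p.edgeSet := by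
  induction p with
  | nil v => simp [support] at hT
  | @cons u _ w e he p ih =>
    have hpcons := List.nodup_cons.1 hp
    by_cases hpT : ∃ x ∈ p.support, x ∈ T ∧ x ≠ w
    · obtain ⟨q, hq⟩ := ih hpcons.2 hb hpT
      exact ⟨q, hq.trans (by simp)⟩
    · push Not at hpT
      obtain ⟨x, hx, hxT, hxw⟩ := hT
      obtain rfl : x = u := (List.mem_cons.1 hx).resolve_right fun h => hxw (hpT x h hxT)
      refine ⟨⟨x, w, cons e he p, hxT, hb, hxw, hp, fun y hy hyT => ?_⟩, subset_rfl⟩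
      exact (List.mem_cons.1 hy).imp_right fun h => hpT y h hyT

theorem exists_TPath (p : G.Walk a b) (ha : a ∈ T) (hb : b ∈ T) (hne : a ≠ b) :
    ∃ q : G.TPath T, q.walk.edgeSet ⊆ p.edgeSet := by
  obtain ⟨q, hnodup, hq⟩ := p.exists_nodup_support
  obtain ⟨r, hr⟩ := q.exists_TPath_of_nodup hnodup hb ⟨a, q.first_mem_support, ha, hne⟩
  exact ⟨r, hr.trans hq⟩

end Walk

section Pendants

variable {N : ℕ}

theorem rankLETwo_pendantIncidence (G : Multigraph V E) (T : Set V) (N : ℕ) :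
    RankLETwo (pendantIncidence G T N) := by
  rintro (e | q) x y z hx hy hz
  · obtain ⟨⟨v, w⟩, hvw⟩ := Sym2.mk_surjective (G.inc e)
    simp only [pendantIncidence, Sum.elim_inl, Set.mem_ofPred_eq, ← hvw] at hx hy hz
    grind
  · exact Or.inl (hx.trans hy.symm)

theorem exists_walk_of_mem_pendantIncidence {b : V} {f : E ⊕ T × Fin N} (p : G.Walk y b)
    (hx : x ∈ pendantIncidence G T N f) (hy : y ∈ pendantIncidence G T N f) :
    ∃ q : G.Walk x b, ∀ e ∈ q.edgeSet, .inl e = f ∨ e ∈ p.edgeSet := by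
  by_cases hxy : x = y
  · subst hxy
    exact ⟨p, fun _ => Or.inr⟩
  rcases f with e | q
  · exact ⟨.cons e ((Sym2.mem_and_mem_iff hxy).1 ⟨hx, hy⟩) p, by simp⟩
  · exact absurd (hx.trans hy.symm) hxy

theorem exists_walk_of_isChain {l : List (E ⊕ T × Fin N)} {f g : E ⊕ T × Fin N}
    (hl : l.IsChain (Touch (pendantIncidence G T N))) (hf : l.head? = some f)
    (hg : l.getLast? = some g) (hx : x ∈ pendantIncidence G T N f)
    (hy : y ∈ pendantIncidence G T N g) : ∃ p : G.Walk x y, ∀ e ∈ p.edgeSet, .inl e ∈ l := by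
  induction l generalizing f x with
  | nil => simp at hf
  | cons f' l ih =>
    obtain rfl : f' = f := by simpa using hf
    obtain ⟨z, p, hz, hp⟩ : ∃ z, ∃ p : G.Walk z y, z ∈ pendantIncidence G T N f' ∧
        ∀ e ∈ p.edgeSet, .inl e ∈ f' :: l := by
      rcases l with _ | ⟨h, l⟩
      · obtain rfl : f' = g := by simpa using hg
        exact ⟨y, .nil y, hy, by simp⟩
      · obtain ⟨⟨z, hzf, hzh⟩, hl⟩ := List.isChain_cons_cons.1 hl
        obtain ⟨p, hp⟩ := ih hl rfl (by simpa using hg) hzh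
        exact ⟨z, p, hzf, fun e he => List.mem_cons_of_mem _ (hp e he)⟩
    obtain ⟨q, hq⟩ := exists_walk_of_mem_pendantIncidence p hx hz
    exact ⟨q, fun e he => (hq e he).elim (fun h => by simp [h]) (hp e)⟩

theorem exists_TPath_of_colourPath {l : List (E ⊕ T × Fin N)}
    (hl : ColourPath (Touch (pendantIncidence G T N)) (pendantColour E T N) l) :
    ∃ p : G.TPath T, ∀ e ∈ p.walk.edgeSet, .inl e ∈ l := by
  obtain ⟨f, g, h, hne⟩ := hl
  rcases f with _ | ⟨s, i⟩
  · exact absurd rfl h.head_coloured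
  rcases g with _ | ⟨t, j⟩
  · exact absurd rfl h.last_coloured
  obtain ⟨p, hp⟩ := exists_walk_of_isChain h.chain h.head?_eq h.getLast?_eq
    (Set.mem_singleton (s : V)) (Set.mem_singleton (t : V))
  obtain ⟨q, hq⟩ := p.exists_TPath s.2 t.2 fun hst => hne (by simp [pendantColour, hst])
  exact ⟨q, fun e he => hp e (hq he)⟩

theorem exists_TPathDisjoint_of_hasPacking {k : ℕ}
    (h : HasPacking (Touch (pendantIncidence G T N)) (pendantColour E T N) k) :
    ∃ P : Set (G.TPath T), G.TPathDisjoint P ∧ P.ncard = k := by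
  obtain ⟨L, hL, rfl⟩ := h
  choose p hp using fun i : Fin L.length =>
    exists_TPath_of_colourPath (hL.colourPath _ (L.get_mem i))
  have hdisj : Pairwise fun i j => Disjoint (p i).walk.edgeSet (p j).walk.edgeSet := by
    have hLL : ∀ i j : Fin L.length, i < j → (L.get i).Disjoint (L.get j) :=
      fun _ _ => List.pairwise_iff_get.1 (List.nodup_flatten.1 hL.nodup).2 _ _
    refine fun i j hne => Set.disjoint_left.2 fun e hei hej => ?_
    rcases lt_or_gt_of_ne hne with hij | hij
    exacts [hLL i j hij (hp i e hei) (hp j e hej), hLL j i hij (hp j e hej) (hp i e hei)]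
  have hinj : Function.Injective p := by
    intro i j hij
    by_contra hne
    obtain ⟨e, he⟩ := (p i).walk.edgeSet_nonempty (p i).ne
    exact (hdisj hne).notMem_of_mem_left he (hij ▸ he)
  refine ⟨Set.range p, ?_, by rw [Set.ncard_range_of_injective hinj, Nat.card_fin]⟩
  rintro _ ⟨i, rfl⟩ _ ⟨j, rfl⟩ hne e hei
  exact (hdisj (ne_of_apply_ne p hne)).notMem_of_mem_left hei

theorem exists_TPathDisjoint [Finite V] [Finite E] {m : ℕ}
    (hm : ∀ A, IsTPartition T A → m ≤ G.partitionBound T A) :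
    ∃ P : Set (G.TPath T), G.TPathDisjoint P ∧ P.ncard = (m + 1) / 2 := by
  have := Fintype.ofFinite V
  exact exists_TPathDisjoint_of_hasPacking (.of_forall_le_value
    (rankLETwo_pendantIncidence G T (m + 1)) fun _ => le_value_pendantLabels hm)

end Pendants

end Multigraph

/-- **Mader's edge-disjoint `T`-path theorem.** In a finite graph, twice the
maximal number of pairwise edge-disjoint `T`-paths equals the minimum over all
`T`-partitions `A` of `∑_{t ∈ T} d(A t) − o(G, A)`, where `o(G, A)` is the
number of components `Y` of `G − ⋃A` with `d(Y)` odd. -/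
theorem mader_edge_disjoint {V E : Type} [Fintype V] [Fintype E]
    (G : Multigraph V E) (T : Set V) :
    2 * sSup {n : ℕ | ∃ P : Set (G.TPath T), G.TPathDisjoint P ∧ P.ncard = n} =
      sInf {k : ℕ | ∃ A : V → Set V, Multigraph.IsTPartition T A ∧
        k = (∑ t ∈ (Set.toFinite T).toFinset, (G.cut (A t)).ncard) -
          {Y : Set V | G.IsComponentOf Y (⋃ t ∈ T, A t)ᶜ ∧
            Odd (G.cut Y).ncard}.ncard} := by
  set S := {n : ℕ | ∃ P : Set (G.TPath T), G.TPathDisjoint P ∧ P.ncard = n}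
  set B := {k : ℕ | ∃ A, Multigraph.IsTPartition T A ∧ k = G.partitionBound T A}
  change 2 * sSup S = sInf B
  have hle : ∀ n ∈ S, 2 * n ≤ sInf B := by
    rintro _ ⟨P, hP, rfl⟩
    obtain ⟨A, hA, hBA⟩ := Nat.sInf_mem (s := B) ⟨_, _, Multigraph.isTPartition_singleton T, rfl⟩
    rw [hBA]
    exact Nat.le_sub_of_add_le (hP.two_mul_ncard_add_le hA)
  have hattained : (sInf B + 1) / 2 ∈ S :=
    Multigraph.exists_TPathDisjoint fun A hA => Nat.sInf_le ⟨A, hA, rfl⟩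
  have hbdd : BddAbove S := ⟨sInf B, fun n hn => by have := hle n hn; lia⟩
  have hge := le_csSup hbdd hattained
  have hmax := hle _ (Nat.sSup_mem ⟨_, hattained⟩ hbdd)
  lia
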